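/- arXiv:2303.11996 — 3 statements merged into one kernel-verified Lean document; each statement's English description precedes it below -/
import Mathlib

section
/- For every integer t ≥ 1, the graph G_t − u_1 is connected and W(G_t − u_1) − W(G_t) = 16t³ − 8t² − 26t − 14. -/
open SimpleGraph Finset

/-- A `Fintype` instance for the vertex set of a vertex-deleted subgraph. -/
noncomputable instance instFintypeNe {V : Type*} [Fintype V] (v : V) :
    Fintype {u : V // u ≠ v} :=
  (Set.toFinite {u : V | u ≠ v}).fintype

/-- The graph obtained from `G` by deleting the vertex `v` (an induced subgraph). -/
def deleteVertex {V : Type*} (G : SimpleGraph V) (v : V) :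
    SimpleGraph {u : V // u ≠ v} :=
  G.induce {u : V | u ≠ v}

/-- The Wiener index of a finite simple graph: the sum of distances over all
unordered pairs of vertices. -/
noncomputable def wiener {V : Type*} [Fintype V] (G : SimpleGraph V) : ℕ :=
  (∑ u : V, ∑ v : V, G.dist u v) / 2

/-- `v` is a Šoltés vertex of `G` if `G - v` is connected and has the same Wiener index. -/
def IsSoltes {V : Type*} [Fintype V] (G : SimpleGraph V) (v : V) : Prop :=
  (deleteVertex G v).Connected ∧ wiener (deleteVertex G v) = wiener G

/-- A graph is cubic (3-regular) if every vertex has exactly 3 neighbours. -/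
def IsCubic {V : Type*} (G : SimpleGraph V) : Prop :=
  ∀ v : V, (G.neighborSet v).ncard = 3

/-- A finite graph is 2-connected if it is connected, has at least 3 vertices,
and stays connected after deleting any one vertex. -/
def TwoConnected {V : Type*} [Fintype V] (G : SimpleGraph V) : Prop :=
  G.Connected ∧ 3 ≤ Fintype.card V ∧ ∀ v : V, (deleteVertex G v).Connected

/-! ### The graph `G_t`

`G_t` has `8t + 8` vertices: `2t` diamonds (copies of `K₄ − e`) arranged in a ring,
where each diamond `j` has vertices `A_j, B_j, C_j, D_j` (encoded as
`Sum.inl (j, 0), …, Sum.inl (j, 3)`), `A_j, B_j` being its two degree-2 vertices;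
consecutive diamonds are joined by the edges `B_j A_{j+1}`, and the remaining
connecting edge (between diamond `2t-1` and diamond `0`) is subdivided by the two
adjacent vertices `z₁, z₂` (encoded `Sum.inr 0, Sum.inr 1`); there is a 4-cycle
`c₁ c₁ₐ c₂ c₂ₐ` (encoded `Sum.inr 2, Sum.inr 4, Sum.inr 3, Sum.inr 5`) whose opposite
vertices `c₁, c₂` are joined to `z₁, z₂` respectively, and pendant leaves
`v₁, v₂` (encoded `Sum.inr 6, Sum.inr 7`) are attached to `c₁ₐ, c₂ₐ`. -/

/-- The vertex type of the graph `G_t`. -/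
abbrev GtV (t : ℕ) : Type := (Fin (2 * t) × Fin 4) ⊕ Fin 8

/-- The edges inside one diamond `K₄ − e`: `A–C, A–D, B–C, B–D, C–D` where
`A, B, C, D` are encoded as `0, 1, 2, 3`. -/
def diamondRel (a b : Fin 4) : Prop :=
  ((a : ℕ) = 0 ∧ (b : ℕ) = 2) ∨ ((a : ℕ) = 0 ∧ (b : ℕ) = 3) ∨
  ((a : ℕ) = 1 ∧ (b : ℕ) = 2) ∨ ((a : ℕ) = 1 ∧ (b : ℕ) = 3) ∨
  ((a : ℕ) = 2 ∧ (b : ℕ) = 3)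

/-- The base edge relation of `G_t` (symmetrized by `SimpleGraph.fromRel`). -/
def gtRel (t : ℕ) : GtV t → GtV t → Prop
  | Sum.inl (j, a), Sum.inl (k, b) =>
      -- edges inside a diamond, and the connecting edges `B_j A_{j+1}`
      (j = k ∧ diamondRel a b) ∨ ((k : ℕ) = (j : ℕ) + 1 ∧ (a : ℕ) = 1 ∧ (b : ℕ) = 0)
  | Sum.inl (j, a), Sum.inr m =>
      -- the edge `B_{2t-1} z₁` (half of the subdivided connecting edge)
      (j : ℕ) = 2 * t - 1 ∧ (a : ℕ) = 1 ∧ (m : ℕ) = 0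
  | Sum.inr m, Sum.inl (j, a) =>
      -- the edge `z₂ A_0` (the other half of the subdivided connecting edge)
      (m : ℕ) = 1 ∧ (j : ℕ) = 0 ∧ (a : ℕ) = 0
  | Sum.inr m, Sum.inr m' =>
      ((m : ℕ) = 0 ∧ (m' : ℕ) = 1) ∨    -- z₁ z₂
      ((m : ℕ) = 0 ∧ (m' : ℕ) = 2) ∨    -- z₁ c₁
      ((m : ℕ) = 1 ∧ (m' : ℕ) = 3) ∨    -- z₂ c₂
      ((m : ℕ) = 2 ∧ (m' : ℕ) = 4) ∨    -- c₁ c₁ₐ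
      ((m : ℕ) = 4 ∧ (m' : ℕ) = 3) ∨    -- c₁ₐ c₂
      ((m : ℕ) = 3 ∧ (m' : ℕ) = 5) ∨    -- c₂ c₂ₐ
      ((m : ℕ) = 5 ∧ (m' : ℕ) = 2) ∨    -- c₂ₐ c₁
      ((m : ℕ) = 4 ∧ (m' : ℕ) = 6) ∨    -- c₁ₐ v₁
      ((m : ℕ) = 5 ∧ (m' : ℕ) = 7)      -- c₂ₐ v₂

/-- The graph `G_t` on `8t + 8` vertices. -/
def GtGraph (t : ℕ) : SimpleGraph (GtV t) := SimpleGraph.fromRel (gtRel t)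

/-- The leaf `v₁` of `G_t`. -/
def gtv1 (t : ℕ) : GtV t := Sum.inr 6

/-- The leaf `v₂` of `G_t`. -/
def gtv2 (t : ℕ) : GtV t := Sum.inr 7

/-- The vertex `u₁ = B_{t-1}` of `G_t`: an endpoint of the edge joining the `t`-th and
`(t+1)`-st diamond, counting from the subdivided edge. -/
def gtu1 (t : ℕ) (ht : 1 ≤ t) : GtV t := Sum.inl (⟨t - 1, by omega⟩, 1)

/-- The vertex `u₂ = A_t` of `G_t`: the other endpoint of the edge joining the `t`-th
and `(t+1)`-st diamond, counting from the subdivided edge. -/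
def gtu2 (t : ℕ) (ht : 1 ≤ t) : GtV t := Sum.inl (⟨t, by omega⟩, 0)

/-!
Cut the ring at the edge `u₁ u₂`. What remains is a thickened path from `u₂` to `u₁` through the
edge `z₁ z₂`, from which the 4-cycle and its leaves hang; its distances are differences of levels
along the path. There `u₁` is simplicial, so deleting it changes no other distance: the Wiener index
drops by the transmission of `u₁`, which is `24t² + 28t + 14`. Putting the edge `u₁ u₂` back instead
only helps two ring vertices whose levels `i < j` satisfy `j - i > 3t + 1`, replacing `j - i` by
`i + 1 + (6t + 1 - j)`; this saves `2(8t³ + 8t² + t)` in total. The difference of the two amounts is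
the claim.
-/

section Distance

variable {V : Type*} {G : SimpleGraph V}

theorem exists_walk_length_le_of_descent {f : V → ℕ} {r : V}
    (hf : ∀ v, v ≠ r → ∃ w, G.Adj v w ∧ f w < f v) (v : V) :
    ∃ p : G.Walk v r, p.length ≤ f v := by
  induction hn : f v using Nat.strong_induction_on generalizing v with
  | _ n ih =>
    subst hn
    obtain rfl | hvr := eq_or_ne v r
    · exact ⟨.nil, Nat.zero_le _⟩
    · obtain ⟨w, hvw, hlt⟩ := hf v hvr
      obtain ⟨p, hp⟩ := ih (f w) hlt w rfl
      exact ⟨.cons hvw p, by rw [Walk.length_cons]; lia⟩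

theorem le_add_length_of_lipschitz {f : V → ℕ} (hf : ∀ v w, G.Adj v w → f v ≤ f w + 1)
    {v w : V} (p : G.Walk v w) : f v ≤ f w + p.length := by
  induction p with
  | nil => exact Nat.le_add_right _ _
  | cons h p ih =>
    have := hf _ _ h
    rw [Walk.length_cons]
    lia

theorem connected_of_descent {f : V → ℕ} {r : V}
    (hf : ∀ v, v ≠ r → ∃ w, G.Adj v w ∧ f w < f v) : G.Connected :=
  (connected_iff_exists_forall_reachable G).mpr
    ⟨r, fun v => (exists_walk_length_le_of_descent hf v).nonempty.map .reverse⟩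

theorem dist_eq_of_lipschitz_of_descent {f : V → ℕ} {r : V} (h0 : f r = 0)
    (hlip : ∀ v w, G.Adj v w → f v ≤ f w + 1)
    (hdesc : ∀ v, v ≠ r → ∃ w, G.Adj v w ∧ f w < f v) (v : V) : G.dist r v = f v := by
  obtain ⟨p, hp⟩ := exists_walk_length_le_of_descent hdesc v
  obtain ⟨q, hq⟩ := p.reachable.exists_walk_length_eq_dist
  have hle := le_add_length_of_lipschitz hlip q
  have := dist_le p
  rw [dist_comm]
  lia

theorem exists_adj_dist_eq_add_one (hG : G.Connected) {r v : V} (h : v ≠ r) :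
    ∃ w, G.Adj v w ∧ G.dist r v = G.dist r w + 1 := by
  obtain ⟨p, hp⟩ := hG.exists_walk_length_eq_dist v r
  cases p with
  | nil => exact absurd rfl h
  | @cons _ w _ hvw p =>
    have hw := dist_le p
    have htri := hG.dist_triangle (u := v) (v := w) (w := r)
    rw [dist_eq_one_iff_adj.mpr hvw] at htri
    rw [Walk.length_cons] at hp
    exact ⟨w, hvw, by rw [dist_comm, dist_comm (u := r)]; lia⟩

theorem dist_le_dist_add_one (r : V) {v w : V} (h : G.Adj v w) :
    G.dist r v ≤ G.dist r w + 1 := by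
  have := h.diff_dist_adj (u := r)
  lia

theorem dist_sup_edge_le (hG : G.Connected) (a b x y : V) :
    (G ⊔ edge a b).dist x y ≤ G.dist x a + 1 + G.dist b y := by
  have hG' : (G ⊔ edge a b).Connected := hG.mono le_sup_left
  have hxa : (G ⊔ edge a b).dist x a ≤ G.dist x a := (hG x a).dist_anti le_sup_left
  have hby : (G ⊔ edge a b).dist b y ≤ G.dist b y := (hG b y).dist_anti le_sup_left
  have hab : (G ⊔ edge a b).dist a b ≤ 1 := by
    obtain rfl | hne := eq_or_ne a b
    · simp only [SimpleGraph.dist_self, zero_le]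
    · exact (dist_eq_one_iff_adj.mpr (Or.inr ((edge_adj ..).mpr ⟨.inl ⟨rfl, rfl⟩, hne⟩))).le
  have hxy := hG'.dist_triangle (u := x) (v := a) (w := y)
  have hay := hG'.dist_triangle (u := a) (v := b) (w := y)
  lia

theorem dist_sup_edge (hG : G.Connected) (a b x y : V) :
    (G ⊔ edge a b).dist x y =
      min (G.dist x y) (min (G.dist x a + 1 + G.dist b y) (G.dist x b + 1 + G.dist a y)) := by
  apply le_antisymm
  · refine le_min ((hG x y).dist_anti le_sup_left) (le_min (dist_sup_edge_le hG a b x y) ?_)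
    rw [edge_comm]
    exact dist_sup_edge_le hG b a x y
  · let f (v : V) : ℕ :=
      min (G.dist x v) (min (G.dist x a + 1 + G.dist b v) (G.dist x b + 1 + G.dist a v))
    have hlip (v w : V) (hvw : (G ⊔ edge a b).Adj v w) : f v ≤ f w + 1 := by
      obtain hvw | hvw := hvw
      · have := dist_le_dist_add_one x hvw
        have := dist_le_dist_add_one a hvw
        have := dist_le_dist_add_one b hvw
        lia
      · obtain ⟨⟨rfl, rfl⟩ | ⟨rfl, rfl⟩, -⟩ := (edge_adj ..).mp hvw <;>
          simp only [f, SimpleGraph.dist_self] <;> lia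
    have hG' : (G ⊔ edge a b).Connected := hG.mono le_sup_left
    obtain ⟨p, hp⟩ := hG'.exists_walk_length_eq_dist y x
    have hfx : f x = 0 := by simp only [f, SimpleGraph.dist_self, Nat.zero_min]
    calc f y ≤ f x + p.length := le_add_length_of_lipschitz hlip p
      _ = (G ⊔ edge a b).dist x y := by rw [hfx, zero_add, hp, SimpleGraph.dist_comm]

end Distance

section DeleteVertex

variable {V : Type*} {G : SimpleGraph V} {a : V}

theorem deleteVertex_sup_edge (G : SimpleGraph V) (a b : V) :
    deleteVertex (G ⊔ edge a b) a = deleteVertex G a := by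
  ext ⟨u, hu⟩ ⟨v, hv⟩
  simp only [deleteVertex, comap_adj, Function.Embedding.subtype_apply, sup_adj, edge_adj]
  grind

theorem exists_ne_adj_dist_lt_of_isClique_neighborSet (hG : G.Connected)
    (ha : G.IsClique (G.neighborSet a)) {r v : V} (hr : r ≠ a) (hv : v ≠ r) :
    ∃ w, w ≠ a ∧ G.Adj v w ∧ G.dist r w < G.dist r v := by
  obtain ⟨w, hvw, hw⟩ := exists_adj_dist_eq_add_one hG hv
  obtain rfl | hwa := eq_or_ne w a
  · -- The neighbour of `w` next on the geodesic to `r` is adjacent to `v`, so `w` was a detour.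
    obtain ⟨x, hwx, hx⟩ := exists_adj_dist_eq_add_one hG hr.symm
    have hvx : v ≠ x := by rintro rfl; lia
    have := dist_le_dist_add_one r (ha hvw.symm hwx hvx)
    lia
  · exact ⟨w, hwa, hvw, by lia⟩

theorem deleteVertex_exists_adj_dist_lt (hG : G.Connected) (ha : G.IsClique (G.neighborSet a))
    (r v : {u : V // u ≠ a}) (hv : v ≠ r) :
    ∃ w, (deleteVertex G a).Adj v w ∧ G.dist r w < G.dist r v := by
  obtain ⟨w, hwa, hvw, hlt⟩ :=
    exists_ne_adj_dist_lt_of_isClique_neighborSet hG ha r.2 (Subtype.coe_ne_coe.mpr hv)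
  exact ⟨⟨w, hwa⟩, hvw, hlt⟩

theorem connected_deleteVertex_of_isClique_neighborSet [Nontrivial V] (hG : G.Connected)
    (ha : G.IsClique (G.neighborSet a)) : (deleteVertex G a).Connected := by
  obtain ⟨r, hr⟩ := exists_ne a
  exact connected_of_descent (deleteVertex_exists_adj_dist_lt hG ha ⟨r, hr⟩)

theorem dist_deleteVertex_of_isClique_neighborSet (hG : G.Connected)
    (ha : G.IsClique (G.neighborSet a)) (u v : {u : V // u ≠ a}) :
    (deleteVertex G a).dist u v = G.dist u v := by
  refine dist_eq_of_lipschitz_of_descent (f := fun v : {u : V // u ≠ a} => G.dist u v) dist_self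
    (fun v w hvw => ?_) (deleteVertex_exists_adj_dist_lt hG ha u) v
  exact dist_le_dist_add_one (G := G) u hvw

end DeleteVertex

section Wiener

variable {V : Type*} [Fintype V]

theorem even_sum_sum_dist (G : SimpleGraph V) : Even (∑ u, ∑ v, G.dist u v) := by
  rw [← ZMod.natCast_eq_zero_iff_even, ← Fintype.sum_prod_type', Nat.cast_sum]
  refine Finset.sum_involution (fun p _ => p.swap) (fun p _ => ?_) (fun p _ hp h => hp ?_)
    (fun _ _ => mem_univ _) (fun _ _ => Prod.swap_swap _)
  · rw [Prod.fst_swap, Prod.snd_swap, dist_comm]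
    exact CharTwo.add_self_eq_zero _
  · rw [show p.2 = p.1 from congrArg Prod.fst h, dist_self, Nat.cast_zero]

theorem two_mul_wiener (G : SimpleGraph V) : 2 * wiener G = ∑ u, ∑ v, G.dist u v :=
  Nat.two_mul_div_two_of_even (even_sum_sum_dist G)

-- This is `Fintype.sum_eq_add_sum_subtype_ne` for the classical instance `instFintypeNe`.
theorem sum_eq_add_sum_ne {M : Type*} [AddCommMonoid M] (a : V) (g : V → M) :
    ∑ u, g u = g a + ∑ u : {u : V // u ≠ a}, g u := by
  classical
  convert Fintype.sum_eq_add_sum_subtype_ne g a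

theorem wiener_deleteVertex_add_sum_dist {G : SimpleGraph V} (hG : G.Connected) {a : V}
    (ha : G.IsClique (G.neighborSet a)) :
    wiener (deleteVertex G a) + ∑ v, G.dist a v = wiener G := by
  have hsplit (u : V) := sum_eq_add_sum_ne a (G.dist u)
  have hcol : ∑ v, G.dist v a = ∑ v, G.dist a v := by simp only [dist_comm]
  have hrow := hsplit a
  have hG2 := two_mul_wiener G
  have hdel := two_mul_wiener (deleteVertex G a)
  simp only [dist_deleteVertex_of_isClique_neighborSet hG ha] at hdel
  rw [sum_eq_add_sum_ne a] at hG2 hcol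
  simp only [hsplit, sum_add_distrib, dist_self] at *
  lia

end Wiener

section ThickPath

variable {R W : Type*} {K : SimpleGraph W} {z₁ z₂ : W} {n n' : ℕ} {ℓ : R → ℕ}

/-- The path on the levels `0, 1, 2, …` in which the consecutive levels `n` and `n + 1` are the
vertices `z₁` and `z₂` of a further graph `K`, and every other level `i` is blown up to the clique
`ℓ ⁻¹' {i}`, consecutive levels being completely joined. -/
def thickPath (K : SimpleGraph W) (z₁ z₂ : W) (n : ℕ) (ℓ : R → ℕ) : SimpleGraph (R ⊕ W) where
  Adj
    | .inl x, .inl y => x ≠ y ∧ Nat.dist (ℓ x) (ℓ y) ≤ 1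
    | .inl x, .inr m | .inr m, .inl x => ℓ x + 1 = n ∧ m = z₁ ∨ ℓ x = n + 2 ∧ m = z₂
    | .inr m, .inr k => K.Adj m k
  symm := ⟨by
    rintro (x | m) (y | k) h
    · exact ⟨h.1.symm, Nat.dist_comm _ _ ▸ h.2⟩
    · exact h
    · exact h
    · exact Adj.symm (G := K) h⟩
  loopless := ⟨by
    rintro (x | m) h
    · exact h.1 rfl
    · exact K.irrefl h⟩

/-- The distance function of `thickPath K z₁ z₂ n ℓ`. The geodesics from `K` to a vertex outside
leave `K` through `z₁` or `z₂`. -/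
noncomputable def thickPathDist [DecidableEq R] (K : SimpleGraph W) (z₁ z₂ : W) (n : ℕ)
    (ℓ : R → ℕ) : R ⊕ W → R ⊕ W → ℕ
  | .inl x, .inl y => if x = y then 0 else max 1 (Nat.dist (ℓ x) (ℓ y))
  | .inl x, .inr m | .inr m, .inl x =>
    min (Nat.dist (ℓ x) n + K.dist z₁ m) (Nat.dist (ℓ x) (n + 1) + K.dist z₂ m)
  | .inr m, .inr k => K.dist m k

theorem thickPathDist_lipschitz [DecidableEq R] (hz : K.Adj z₁ z₂)
    (hℓ : ∀ x, ℓ x ≠ n ∧ ℓ x ≠ n + 1) (r v w : R ⊕ W) (hvw : (thickPath K z₁ z₂ n ℓ).Adj v w) :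
    thickPathDist K z₁ z₂ n ℓ r v ≤ thickPathDist K z₁ z₂ n ℓ r w + 1 := by
  have hz12 : K.dist z₁ z₂ = 1 := dist_eq_one_iff_adj.mpr hz
  have hz21 : K.dist z₂ z₁ = 1 := dist_eq_one_iff_adj.mpr hz.symm
  rcases v with y | m <;> rcases w with y' | m'
  · obtain ⟨-, hyy'⟩ := hvw
    rcases r with x | k <;> simp only [thickPathDist, Nat.dist] at hyy' ⊢
    · have := hℓ x; have := hℓ y; have := hℓ y'
      grind
    · grind
  · have := hℓ y
    rcases r with x | k
    · have := hℓ x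
      obtain ⟨hy, rfl⟩ | ⟨hy, rfl⟩ := hvw <;>
        simp only [thickPathDist, Nat.dist, SimpleGraph.dist_self, *] <;> grind
    · have := dist_le_dist_add_one k hz
      have := dist_le_dist_add_one k hz.symm
      obtain ⟨hy, rfl⟩ | ⟨hy, rfl⟩ := hvw <;>
        simp only [thickPathDist, Nat.dist] <;> grind [SimpleGraph.dist_comm]
  · have := hℓ y'
    rcases r with x | k
    · have := hℓ x
      obtain ⟨hy, rfl⟩ | ⟨hy, rfl⟩ := hvw <;>
        simp only [thickPathDist, Nat.dist, SimpleGraph.dist_self, *] <;> grind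
    · have := dist_le_dist_add_one k hz
      have := dist_le_dist_add_one k hz.symm
      obtain ⟨hy, rfl⟩ | ⟨hy, rfl⟩ := hvw <;>
        simp only [thickPathDist, Nat.dist] <;> grind [SimpleGraph.dist_comm]
  · have hvw : K.Adj m m' := hvw
    rcases r with x | k
    · have := dist_le_dist_add_one z₁ hvw
      have := dist_le_dist_add_one z₂ hvw
      simp only [thickPathDist]
      lia
    · have := dist_le_dist_add_one k hvw
      simp only [thickPathDist]
      lia

theorem exists_thickPath_adj_level (hℓ : ∀ i, (∃ x, ℓ x = i) ↔ i < n ∨ n + 2 ≤ i ∧ i < n + 2 + n')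
    {y : R} {i : ℕ} (hi : i < n + 2 + n') (hyi : Nat.dist (ℓ y) i = 1) :
    ∃ w, (thickPath K z₁ z₂ n ℓ).Adj (.inl y) w ∧
      ((∃ y', w = .inl y' ∧ ℓ y' = i) ∨ w = .inr z₁ ∧ i = n ∨ w = .inr z₂ ∧ i = n + 1) := by
  have hy := (hℓ (ℓ y)).mp ⟨y, rfl⟩
  rw [Nat.dist] at hyi
  by_cases hin : i = n
  · exact ⟨.inr z₁, .inl ⟨by lia, rfl⟩, .inr (.inl ⟨rfl, hin⟩)⟩
  by_cases hin' : i = n + 1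
  · exact ⟨.inr z₂, .inr ⟨by lia, rfl⟩, .inr (.inr ⟨rfl, hin'⟩)⟩
  obtain ⟨y', rfl⟩ := (hℓ i).mpr (by lia)
  exact ⟨.inl y', ⟨by rintro rfl; lia, by rw [Nat.dist]; lia⟩, .inl ⟨y', rfl, rfl⟩⟩

theorem exists_adj_inl_thickPathDist_lt [DecidableEq R] (hz : K.Adj z₁ z₂)
    (hℓ : ∀ i, (∃ x, ℓ x = i) ↔ i < n ∨ n + 2 ≤ i ∧ i < n + 2 + n') (r : R ⊕ W) (y : R)
    (hr : .inl y ≠ r) :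
    ∃ w, (thickPath K z₁ z₂ n ℓ).Adj (.inl y) w ∧
      thickPathDist K z₁ z₂ n ℓ r w < thickPathDist K z₁ z₂ n ℓ r (.inl y) := by
  have hz12 : K.dist z₁ z₂ = 1 := dist_eq_one_iff_adj.mpr hz
  have hz21 : K.dist z₂ z₁ = 1 := dist_eq_one_iff_adj.mpr hz.symm
  have hy := (hℓ (ℓ y)).mp ⟨y, rfl⟩
  rcases r with x | k
  · have hx := (hℓ (ℓ x)).mp ⟨x, rfl⟩
    have hyx : y ≠ x := fun h => hr (congrArg _ h)
    by_cases hnear : Nat.dist (ℓ y) (ℓ x) ≤ 1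
    · exact ⟨.inl x, ⟨hyx, hnear⟩, by simp only [thickPathDist]; grind⟩
    · obtain ⟨i, hi, hyi, hxi⟩ : ∃ i < n + 2 + n', Nat.dist (ℓ y) i = 1 ∧
          Nat.dist (ℓ x) i + 1 = Nat.dist (ℓ x) (ℓ y) := by
        simp only [Nat.dist] at *
        obtain h | h := lt_or_ge (ℓ y) (ℓ x)
        · exact ⟨ℓ y + 1, by lia⟩
        · exact ⟨ℓ y - 1, by lia⟩
      obtain ⟨w, hw, ⟨y', rfl, rfl⟩ | ⟨rfl, rfl⟩ | ⟨rfl, rfl⟩⟩ :=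
        exists_thickPath_adj_level (K := K) (z₁ := z₁) (z₂ := z₂) hℓ hi hyi <;>
      · refine ⟨_, hw, ?_⟩
        simp only [thickPathDist, Nat.dist, SimpleGraph.dist_self, hz12, hz21] at *
        grind
  · have hzk₁ := dist_le_dist_add_one k hz
    have hzk₂ := dist_le_dist_add_one k hz.symm
    obtain ⟨i, hi, hyi, hin⟩ : ∃ i < n + 2 + n', Nat.dist (ℓ y) i = 1 ∧
        (ℓ y < i ∧ i ≤ n ∨ n + 1 ≤ i ∧ i < ℓ y) := by
      simp only [Nat.dist]
      obtain h | h := hy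
      · exact ⟨ℓ y + 1, by lia⟩
      · exact ⟨ℓ y - 1, by lia⟩
    obtain ⟨w, hw, ⟨y', rfl, rfl⟩ | ⟨rfl, rfl⟩ | ⟨rfl, rfl⟩⟩ :=
      exists_thickPath_adj_level (K := K) (z₁ := z₁) (z₂ := z₂) hℓ hi hyi <;>
    · refine ⟨_, hw, ?_⟩
      simp only [thickPathDist, Nat.dist, SimpleGraph.dist_comm (v := k)] at *
      grind

theorem exists_adj_inr_thickPathDist_inl_lt [DecidableEq R] (hK : K.Connected)
    (hz : K.Adj z₁ z₂) (hℓ : ∀ i, (∃ x, ℓ x = i) ↔ i < n ∨ n + 2 ≤ i ∧ i < n + 2 + n')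
    (x : R) (m : W) :
    ∃ w, (thickPath K z₁ z₂ n ℓ).Adj (.inr m) w ∧
      thickPathDist K z₁ z₂ n ℓ (.inl x) w < thickPathDist K z₁ z₂ n ℓ (.inl x) (.inr m) := by
  have hm₁ := dist_le_dist_add_one m hz
  have hm₂ := dist_le_dist_add_one m hz.symm
  have hlevel (i : ℕ) (hi : i < n ∨ n + 2 ≤ i ∧ i < n + 2 + n') :
      ∃ y, ℓ y = i ∧ (ℓ x = i → x = y) := by
    obtain hxi | hxi := eq_or_ne (ℓ x) i
    · exact ⟨x, hxi, fun _ => rfl⟩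
    · obtain ⟨y, hy⟩ := (hℓ i).mpr hi
      exact ⟨y, hy, fun h => absurd h hxi⟩
  obtain hlt | hgt := (hℓ (ℓ x)).mp ⟨x, rfl⟩
  · obtain rfl | hm := eq_or_ne m z₁
    · obtain ⟨y, hy, hxy⟩ := hlevel (n - 1) (by lia)
      refine ⟨.inl y, .inl ⟨by lia, rfl⟩, ?_⟩
      simp only [thickPathDist, Nat.dist, SimpleGraph.dist_self] at *
      grind
    · obtain ⟨w, hw, hlt⟩ := exists_adj_dist_eq_add_one hK hm
      refine ⟨.inr w, hw, ?_⟩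
      simp only [thickPathDist, Nat.dist, SimpleGraph.dist_comm (v := m),
        SimpleGraph.dist_comm (v := w)] at *
      grind
  · obtain rfl | hm := eq_or_ne m z₂
    · obtain ⟨y, hy, hxy⟩ := hlevel (n + 2) (by lia)
      refine ⟨.inl y, .inr ⟨hy, rfl⟩, ?_⟩
      simp only [thickPathDist, Nat.dist, SimpleGraph.dist_self] at *
      grind
    · obtain ⟨w, hw, hlt⟩ := exists_adj_dist_eq_add_one hK hm
      refine ⟨.inr w, hw, ?_⟩
      simp only [thickPathDist, Nat.dist, SimpleGraph.dist_comm (v := m),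
        SimpleGraph.dist_comm (v := w)] at *
      grind

theorem exists_adj_inr_thickPathDist_lt [DecidableEq R] (hK : K.Connected) (hz : K.Adj z₁ z₂)
    (hℓ : ∀ i, (∃ x, ℓ x = i) ↔ i < n ∨ n + 2 ≤ i ∧ i < n + 2 + n') (r : R ⊕ W) (m : W)
    (hr : .inr m ≠ r) :
    ∃ w, (thickPath K z₁ z₂ n ℓ).Adj (.inr m) w ∧
      thickPathDist K z₁ z₂ n ℓ r w < thickPathDist K z₁ z₂ n ℓ r (.inr m) := by
  rcases r with x | k
  · exact exists_adj_inr_thickPathDist_inl_lt hK hz hℓ x m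
  · obtain ⟨w, hw, hlt⟩ := exists_adj_dist_eq_add_one hK fun h => hr (congrArg _ h)
    exact ⟨.inr w, hw, by simp only [thickPathDist]; lia⟩

theorem exists_thickPath_adj_thickPathDist_lt [DecidableEq R] (hK : K.Connected)
    (hz : K.Adj z₁ z₂) (hℓ : ∀ i, (∃ x, ℓ x = i) ↔ i < n ∨ n + 2 ≤ i ∧ i < n + 2 + n')
    (r v : R ⊕ W) (hv : v ≠ r) :
    ∃ w, (thickPath K z₁ z₂ n ℓ).Adj v w ∧
      thickPathDist K z₁ z₂ n ℓ r w < thickPathDist K z₁ z₂ n ℓ r v := by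
  rcases v with y | m
  · exact exists_adj_inl_thickPathDist_lt hz hℓ r y hv
  · exact exists_adj_inr_thickPathDist_lt hK hz hℓ r m hv

theorem thickPath_connected (hK : K.Connected) (hz : K.Adj z₁ z₂)
    (hℓ : ∀ i, (∃ x, ℓ x = i) ↔ i < n ∨ n + 2 ≤ i ∧ i < n + 2 + n') :
    (thickPath K z₁ z₂ n ℓ).Connected := by
  classical
  exact connected_of_descent (exists_thickPath_adj_thickPathDist_lt hK hz hℓ (.inr z₁))

theorem dist_thickPath [DecidableEq R] (hK : K.Connected) (hz : K.Adj z₁ z₂)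
    (hℓ : ∀ i, (∃ x, ℓ x = i) ↔ i < n ∨ n + 2 ≤ i ∧ i < n + 2 + n') (u v : R ⊕ W) :
    (thickPath K z₁ z₂ n ℓ).dist u v = thickPathDist K z₁ z₂ n ℓ u v := by
  refine dist_eq_of_lipschitz_of_descent ?_ (thickPathDist_lipschitz hz (fun x => ?_) u)
    (exists_thickPath_adj_thickPathDist_lt hK hz hℓ u) v
  · rcases u with x | m
    · exact if_pos rfl
    · exact SimpleGraph.dist_self
  · have := (hℓ (ℓ x)).mp ⟨x, rfl⟩
    lia

theorem isClique_neighborSet_thickPath {a : R} (hna : n + 2 < ℓ a) (ha : ∀ x, ℓ x ≤ ℓ a) :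
    (thickPath K z₁ z₂ n ℓ).IsClique ((thickPath K z₁ z₂ n ℓ).neighborSet (.inl a)) := by
  have hW (m : W) : ¬(thickPath K z₁ z₂ n ℓ).Adj (.inl a) (.inr m) := by
    rintro (⟨h, -⟩ | ⟨h, -⟩) <;> lia
  rintro (x | m) hx (y | k) hy hne
  · obtain ⟨-, hx⟩ := hx
    obtain ⟨-, hy⟩ := hy
    have := ha x
    have := ha y
    refine ⟨fun h => hne (congrArg _ h), ?_⟩
    rw [Nat.dist] at *
    lia
  · exact absurd hy (hW k)
  · exact absurd hx (hW m)
  · exact absurd hx (hW m)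

theorem dist_thickPath_of_forall_level_eq (hK : K.Connected) (hz : K.Adj z₁ z₂)
    (hℓ : ∀ i, (∃ x, ℓ x = i) ↔ i < n ∨ n + 2 ≤ i ∧ i < n + 2 + n') {a : R}
    (ha : ∀ x, ℓ x = ℓ a → x = a) (x : R) :
    (thickPath K z₁ z₂ n ℓ).dist (.inl a) (.inl x) = Nat.dist (ℓ a) (ℓ x) := by
  classical
  have := ha x
  rw [dist_thickPath hK hz hℓ]
  simp only [thickPathDist, Nat.dist]
  grind

theorem dist_thickPath_eq_dist_sup_edge_add (hK : K.Connected) (hz : K.Adj z₁ z₂)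
    (hℓ : ∀ i, (∃ x, ℓ x = i) ↔ i < n ∨ n + 2 ≤ i ∧ i < n + 2 + n) {a b : R}
    (ha : ∀ x, ℓ x = 2 * n + 1 ↔ x = a) (hb : ∀ x, ℓ x = 0 ↔ x = b) (x y : R) :
    (thickPath K z₁ z₂ n ℓ).dist (.inl x) (.inl y) =
      (thickPath K z₁ z₂ n ℓ ⊔ edge (.inl a) (.inl b)).dist (.inl x) (.inl y) +
        2 * ((ℓ y - ℓ x - (n + 1)) + (ℓ x - ℓ y - (n + 1))) := by
  classical
  have hle (x : R) : ℓ x ≤ 2 * n + 1 := by have := (hℓ (ℓ x)).mp ⟨x, rfl⟩; lia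
  have ha₀ := (ha a).mpr rfl
  have hb₀ := (hb b).mpr rfl
  have hda (x : R) : (thickPath K z₁ z₂ n ℓ).dist (.inl a) (.inl x) = 2 * n + 1 - ℓ x := by
    have := hle x
    rw [dist_thickPath_of_forall_level_eq hK hz hℓ (fun x hx => (ha x).mp (hx.trans ha₀)), Nat.dist]
    lia
  have hdb (x : R) : (thickPath K z₁ z₂ n ℓ).dist (.inl b) (.inl x) = ℓ x := by
    rw [dist_thickPath_of_forall_level_eq hK hz hℓ (fun x hx => (hb x).mp (hx.trans hb₀)), Nat.dist]
    lia
  have := hle x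
  have := hle y
  rw [dist_sup_edge (thickPath_connected hK hz hℓ), SimpleGraph.dist_comm (v := Sum.inl a),
    SimpleGraph.dist_comm (v := Sum.inl b), hda, hda, hdb, hdb, dist_thickPath hK hz hℓ,
    thickPathDist, Nat.dist]
  split_ifs with hxy
  · subst hxy
    lia
  · lia

theorem dist_thickPath_sup_edge_inr (hK : K.Connected) (hz : K.Adj z₁ z₂)
    (hℓ : ∀ i, (∃ x, ℓ x = i) ↔ i < n ∨ n + 2 ≤ i ∧ i < n + 2 + n) {a b : R}
    (ha : ℓ a = 2 * n + 1) (hb : ℓ b = 0) (v : R ⊕ W) (m : W) :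
    (thickPath K z₁ z₂ n ℓ ⊔ edge (.inl a) (.inl b)).dist v (.inr m) =
      (thickPath K z₁ z₂ n ℓ).dist v (.inr m) := by
  classical
  have hm₁ := dist_le_dist_add_one m hz
  have hm₂ := dist_le_dist_add_one m hz.symm
  rw [dist_sup_edge (thickPath_connected hK hz hℓ)]
  rcases v with x | k
  · have := (hℓ (ℓ x)).mp ⟨x, rfl⟩
    simp only [dist_thickPath hK hz hℓ, thickPathDist, Nat.dist,
      SimpleGraph.dist_comm (u := m)] at *
    grind
  · have := hK.dist_triangle (u := k) (v := z₁) (w := m)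
    have := hK.dist_triangle (u := k) (v := z₂) (w := m)
    have := dist_le_dist_add_one k hz
    have := dist_le_dist_add_one k hz.symm
    simp only [dist_thickPath hK hz hℓ, thickPathDist, Nat.dist,
      SimpleGraph.dist_comm (u := k) (v := z₁),
      SimpleGraph.dist_comm (u := k) (v := z₂), SimpleGraph.dist_comm (u := m)] at *
    grind

section Fintype

variable [Fintype R] [Fintype W]

theorem sum_dist_thickPath (hK : K.Connected) (hz : K.Adj z₁ z₂)
    (hℓ : ∀ i, (∃ x, ℓ x = i) ↔ i < n ∨ n + 2 ≤ i ∧ i < n + 2 + n') {a : R}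
    (hna : n + 2 ≤ ℓ a) (ha : ∀ x, x ≠ a → ℓ x < ℓ a) :
    ∑ v, (thickPath K z₁ z₂ n ℓ).dist (.inl a) v =
      ∑ x, (ℓ a - ℓ x) + ∑ m, (ℓ a - (n + 1) + K.dist z₂ m) := by
  classical
  rw [Fintype.sum_sum_type]
  congr! 2 with x - m -
  · have hx : x ≠ a → ℓ x < ℓ a := ha x
    rw [dist_thickPath_of_forall_level_eq hK hz hℓ (fun x h => by_contra fun hx => (ha x hx).ne h),
      Nat.dist]
    grind
  · have := dist_le_dist_add_one m hz.symm
    rw [dist_thickPath hK hz hℓ]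
    simp only [thickPathDist, Nat.dist, SimpleGraph.dist_comm (u := m)] at *
    lia

theorem wiener_thickPath (hK : K.Connected) (hz : K.Adj z₁ z₂)
    (hℓ : ∀ i, (∃ x, ℓ x = i) ↔ i < n ∨ n + 2 ≤ i ∧ i < n + 2 + n) {a b : R}
    (ha : ∀ x, ℓ x = 2 * n + 1 ↔ x = a) (hb : ∀ x, ℓ x = 0 ↔ x = b) :
    wiener (thickPath K z₁ z₂ n ℓ) =
      wiener (thickPath K z₁ z₂ n ℓ ⊔ edge (.inl a) (.inl b)) +
        2 * ∑ x, ∑ y, (ℓ y - ℓ x - (n + 1)) := by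
  have hR := dist_thickPath_eq_dist_sup_edge_add hK hz hℓ ha hb
  have hW := dist_thickPath_sup_edge_inr hK hz hℓ ((ha a).mpr rfl) ((hb b).mpr rfl)
  set H := thickPath K z₁ z₂ n ℓ
  have hW' (m : W) (v : R ⊕ W) :
      (H ⊔ edge (.inl a) (.inl b)).dist (.inr m) v = H.dist (.inr m) v := by
    rw [SimpleGraph.dist_comm, hW, SimpleGraph.dist_comm]
  have hsymm : ∑ x, ∑ y, (ℓ x - ℓ y - (n + 1)) = ∑ x, ∑ y, (ℓ y - ℓ x - (n + 1)) := sum_comm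
  have hH := two_mul_wiener H
  have hG := two_mul_wiener (H ⊔ edge (.inl a) (.inl b))
  simp only [Fintype.sum_sum_type, hR, hW, hW', sum_add_distrib, ← mul_sum, hsymm] at hH hG
  lia

end Fintype

end ThickPath

section Gadget

/-- The part of `G_t` outside the ring of diamonds: the edge `z₁ z₂` together with the 4-cycle and
its two leaves, labelled as in `gtRel`. It does not depend on `t`. -/
def gadget : SimpleGraph (Fin 8) := .fromRel fun m k => gtRel 0 (.inr m) (.inr k)

instance : DecidableRel gadget.Adj := fun m k => by
  dsimp only [gadget, fromRel_adj, gtRel]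
  infer_instance

/-- The distances from `z₂` in `gadget`. -/
def gadgetDist : Fin 8 → ℕ := ![1, 0, 2, 1, 2, 2, 3, 3]

theorem exists_gadget_adj_gadgetDist_lt :
    ∀ m, m ≠ 1 → ∃ k, gadget.Adj m k ∧ gadgetDist k < gadgetDist m := by
  decide

theorem gadget_connected : gadget.Connected :=
  connected_of_descent exists_gadget_adj_gadgetDist_lt

theorem gadget_adj_zero_one : gadget.Adj 0 1 := by decide

theorem gadget_dist_one (m : Fin 8) : gadget.dist 1 m = gadgetDist m :=
  dist_eq_of_lipschitz_of_descent (f := gadgetDist) rfl (by decide)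
    exists_gadget_adj_gadgetDist_lt m

end Gadget

section Level

variable {t : ℕ}

/-- The distance of a vertex of the diamond `K₄ − e` from its degree-2 vertex `A`. -/
def diamondPos : Fin 4 → ℕ := ![0, 2, 1, 1]

theorem diamondPos_le_two : ∀ a, diamondPos a ≤ 2 := by decide

theorem diamondPos_eq_zero_iff : ∀ a, diamondPos a = 0 ↔ a = 0 := by decide

theorem diamondPos_eq_two_iff : ∀ a, diamondPos a = 2 ↔ a = 1 := by decide

theorem diamondRel_or_diamondRel_iff (a b : Fin 4) :
    diamondRel a b ∨ diamondRel b a ↔ a ≠ b ∧ Nat.dist (diamondPos a) (diamondPos b) ≤ 1 := by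
  unfold diamondRel
  decide +revert

/-- The distance of a ring vertex of `G_t` from `u₂` after deleting the edge `u₁ u₂`. -/
def gtLevel (t : ℕ) (x : Fin (2 * t) × Fin 4) : ℕ :=
  if t ≤ x.1 then 3 * (x.1 - t) + diamondPos x.2 else 3 * (x.1 + t) + 2 + diamondPos x.2

theorem exists_gtLevel_eq_iff (i : ℕ) :
    (∃ x, gtLevel t x = i) ↔ i < 3 * t ∨ 3 * t + 2 ≤ i ∧ i < 3 * t + 2 + 3 * t := by
  have hsurj : ∀ p < 3, ∃ a, diamondPos a = p := by decide
  constructor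
  · rintro ⟨x, rfl⟩
    have := diamondPos_le_two x.2
    rw [gtLevel]
    grind
  · rintro (hi | ⟨hi, hi'⟩)
    · obtain ⟨a, ha⟩ := hsurj (i % 3) (Nat.mod_lt _ three_pos)
      refine ⟨(⟨t + i / 3, by lia⟩, a), ?_⟩
      simp only [gtLevel]
      lia
    · obtain ⟨a, ha⟩ := hsurj ((i - 2) % 3) (Nat.mod_lt _ three_pos)
      refine ⟨(⟨(i - 2) / 3 - t, by lia⟩, a), ?_⟩
      simp only [gtLevel]
      lia

theorem gtLevel_eq_top_iff (ht : 1 ≤ t) (x : Fin (2 * t) × Fin 4) :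
    gtLevel t x = 2 * (3 * t) + 1 ↔ x = (⟨t - 1, by omega⟩, 1) := by
  have := diamondPos_le_two x.2
  rw [Prod.ext_iff, ← diamondPos_eq_two_iff, Fin.ext_iff, gtLevel]
  grind

theorem gtLevel_eq_zero_iff (ht : 1 ≤ t) (x : Fin (2 * t) × Fin 4) :
    gtLevel t x = 0 ↔ x = (⟨t, by omega⟩, 0) := by
  rw [Prod.ext_iff, ← diamondPos_eq_zero_iff, Fin.ext_iff, gtLevel]
  grind

theorem sum_diamondPos (f : ℕ → ℕ) : ∑ a, f (diamondPos a) = f 0 + 2 * f 1 + f 2 := by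
  simp only [Fin.sum_univ_four, diamondPos, Matrix.cons_val]
  ring

theorem sum_gtLevel (f : ℕ → ℕ) :
    ∑ x, f (gtLevel t x) =
      ∑ i ∈ range t, ∑ a, (f (3 * i + diamondPos a) + f (3 * (i + t) + 2 + diamondPos a)) := by
  let g (j : ℕ) : ℕ :=
    ∑ a, f (if t ≤ j then 3 * (j - t) + diamondPos a else 3 * (j + t) + 2 + diamondPos a)
  calc ∑ x, f (gtLevel t x) = ∑ j ∈ range (2 * t), g j := by
        rw [Fintype.sum_prod_type]
        exact Fin.sum_univ_eq_sum_range g (2 * t)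
    _ = ∑ i ∈ range t, (g (t + i) + g i) := by
        rw [two_mul, sum_range_add, sum_add_distrib, add_comm]
    _ = _ := by
        refine sum_congr rfl fun i hi => ?_
        simp only [g, Nat.le_add_right, if_true, Nat.add_sub_cancel_left,
          if_neg (mem_range.mp hi).not_ge, sum_add_distrib]

theorem two_mul_sum_range_sub (t : ℕ) : 2 * ∑ i ∈ range t, (t - i) = t * (t + 1) := by
  induction t with
  | zero => rfl
  | succ t ih =>
    simp only [sum_range_succ', Nat.add_sub_add_right, mul_add, ih]
    lia

theorem sum_top_sub_gtLevel (t : ℕ) :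
    ∑ x, (2 * (3 * t) + 1 - gtLevel t x) = 24 * t ^ 2 + 4 * t := by
  have hdiamond (i : ℕ) (hi : i ∈ range t) :
      ∑ a, (2 * (3 * t) + 1 - (3 * i + diamondPos a) +
        (2 * (3 * t) + 1 - (3 * (i + t) + 2 + diamondPos a))) + 8 = 24 * (t - i) + 12 * t := by
    rw [mem_range] at hi
    rw [sum_diamondPos fun p => 2 * (3 * t) + 1 - (3 * i + p) +
      (2 * (3 * t) + 1 - (3 * (i + t) + 2 + p))]
    lia
  have hsum := sum_congr rfl hdiamond
  have hgauss := two_mul_sum_range_sub t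
  simp only [sum_add_distrib, ← mul_sum, sum_const, card_range, smul_eq_mul] at hsum
  rw [sum_gtLevel]
  simp only [sum_add_distrib]
  lia

/-- Half of the total increase that removing the edge `u₁ u₂` causes in the distances between the
`i`-th diamond after `u₂` and the `k`-th diamond of the ring, where `i` and `k` count from `0` and
are less than `t`. -/
def diamondExcess (i k : ℕ) : ℕ :=
  ∑ a, ∑ b, (3 * k + 1 + diamondPos b - (3 * i + diamondPos a))

theorem sum_sum_gtLevel_sub_eq_sum_diamondExcess (t : ℕ) :
    ∑ x, ∑ y, (gtLevel t y - gtLevel t x - (3 * t + 1)) =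
      ∑ i ∈ range t, ∑ k ∈ range t, diamondExcess i k := by
  simp only [fun x => sum_gtLevel (t := t) fun l => l - gtLevel t x - (3 * t + 1)]
  rw [sum_gtLevel fun l => ∑ k ∈ range t, ∑ b, (3 * k + diamondPos b - l - (3 * t + 1) +
    (3 * (k + t) + 2 + diamondPos b - l - (3 * t + 1)))]
  refine sum_congr rfl fun i _ => ?_
  simp only [← sum_add_distrib, diamondExcess]
  rw [sum_comm]
  -- Levels on the same side of `z₁ z₂` differ by less than `3 * t`, so three of four terms vanish.
  refine sum_congr rfl fun k hk => sum_congr rfl fun a _ => sum_congr rfl fun b _ => ?_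
  have := mem_range.mp hk
  have := diamondPos_le_two b
  lia

theorem diamondExcess_eq (i k : ℕ) :
    diamondExcess i k = if i < k then 48 * (k - i) + 16 else if i = k then 17 else 0 := by
  simp only [diamondExcess, Fin.sum_univ_four, diamondPos, Matrix.cons_val]
  split_ifs <;> lia

theorem sum_sum_diamondExcess (t : ℕ) :
    ∑ i ∈ range t, ∑ k ∈ range t, diamondExcess i k = 8 * t ^ 3 + 8 * t ^ 2 + t := by
  induction t with
  | zero => rfl
  | succ t ih =>
    have hcol : ∑ i ∈ range t, diamondExcess i t = 24 * (t * (t + 1)) + 16 * t := by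
      have hblock (i : ℕ) (hi : i ∈ range t) : diamondExcess i t = 48 * (t - i) + 16 := by
        rw [diamondExcess_eq, if_pos (mem_range.mp hi)]
      rw [sum_congr rfl hblock, sum_add_distrib, ← mul_sum, ← two_mul_sum_range_sub, sum_const,
        card_range, smul_eq_mul]
      lia
    have hrow : ∑ k ∈ range t, diamondExcess t k = 0 := by
      refine sum_eq_zero fun k hk => ?_
      have := mem_range.mp hk
      rw [diamondExcess_eq, if_neg (by lia), if_neg (by lia)]
    have hcorner : diamondExcess t t = 17 := by
      rw [diamondExcess_eq, if_neg (lt_irrefl t), if_pos rfl]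
    simp only [sum_range_succ, sum_add_distrib, ih, hcol, hrow, hcorner]
    ring

end Level

section Cut

variable {t : ℕ}

/-- `G_t` without the edge `u₁ u₂`. -/
def gtCut (t : ℕ) : SimpleGraph (GtV t) := thickPath gadget 0 1 (3 * t) (gtLevel t)

theorem gtGraph_eq_gtCut_sup_edge (ht : 1 ≤ t) :
    GtGraph t = gtCut t ⊔ edge (gtu1 t ht) (gtu2 t ht) := by
  ext (⟨j, a⟩ | m) (⟨k, b⟩ | m')
  · have hab := diamondRel_or_diamondRel_iff a b
    have := diamondPos_le_two a
    have := diamondPos_le_two b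
    simp only [GtGraph, fromRel_adj, gtRel, sup_adj, edge_adj, gtCut, thickPath, gtu1, gtu2,
      gtLevel, Nat.dist, ne_eq, Sum.inl.injEq, Prod.mk.injEq] at *
    obtain rfl | hjk := eq_or_ne j k
    · simp only [true_and]
      have : (j : ℕ) = t → (j : ℕ) ≠ t - 1 := by lia
      grind
    · have ha₀ := diamondPos_eq_zero_iff a
      have hb₀ := diamondPos_eq_zero_iff b
      have ha₂ := diamondPos_eq_two_iff a
      have hb₂ := diamondPos_eq_two_iff b
      simp only [hjk, hjk.symm, Fin.ext_iff] at *
      clear hab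
      grind
  · have := diamondPos_le_two a
    have ha₀ := diamondPos_eq_zero_iff a
    have ha₂ := diamondPos_eq_two_iff a
    simp only [GtGraph, fromRel_adj, gtRel, sup_adj, edge_adj, gtCut, thickPath, gtu1, gtu2,
      gtLevel, reduceCtorEq, ne_eq, and_false, false_and, or_false, Fin.ext_iff] at *
    grind
  · have := diamondPos_le_two b
    have hb₀ := diamondPos_eq_zero_iff b
    have hb₂ := diamondPos_eq_two_iff b
    simp only [GtGraph, fromRel_adj, gtRel, sup_adj, edge_adj, gtCut, thickPath, gtu1, gtu2,
      gtLevel, reduceCtorEq, ne_eq, false_and, or_false, Fin.ext_iff] at *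
    grind
  · simp only [GtGraph, gadget, fromRel_adj, gtRel, sup_adj, edge_adj, gtCut, thickPath, gtu1,
      gtu2, reduceCtorEq, ne_eq, Sum.inr.injEq, false_and, or_false]

theorem gtCut_connected (t : ℕ) : (gtCut t).Connected :=
  thickPath_connected gadget_connected gadget_adj_zero_one exists_gtLevel_eq_iff

theorem isClique_neighborSet_gtCut_gtu1 (ht : 1 ≤ t) :
    (gtCut t).IsClique ((gtCut t).neighborSet (gtu1 t ht)) := by
  have htop := (gtLevel_eq_top_iff ht _).mpr rfl
  refine isClique_neighborSet_thickPath (by lia) fun x => ?_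
  have := (exists_gtLevel_eq_iff _).mp ⟨x, rfl⟩
  lia

theorem sum_dist_gtCut_gtu1 (ht : 1 ≤ t) :
    ∑ v, (gtCut t).dist (gtu1 t ht) v = 24 * t ^ 2 + 28 * t + 14 := by
  have htop := (gtLevel_eq_top_iff ht _).mpr rfl
  have hgadget : ∑ m, (3 * t + gadgetDist m) = 24 * t + 14 := by
    simp only [sum_add_distrib, sum_const, card_univ, Fintype.card_fin, smul_eq_mul,
      Fin.sum_univ_eight, gadgetDist, Matrix.cons_val]
    ring
  rw [gtCut, gtu1, sum_dist_thickPath gadget_connected gadget_adj_zero_one exists_gtLevel_eq_iff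
    (by lia) fun x hx => ?_, htop, sum_top_sub_gtLevel]
  · simp only [gadget_dist_one, show 2 * (3 * t) + 1 - (3 * t + 1) = 3 * t by lia, hgadget]
    ring
  · have := (exists_gtLevel_eq_iff _).mp ⟨x, rfl⟩
    have := mt (gtLevel_eq_top_iff ht x).mp hx
    lia

theorem wiener_gtCut (ht : 1 ≤ t) :
    wiener (gtCut t) = wiener (GtGraph t) + 2 * (8 * t ^ 3 + 8 * t ^ 2 + t) := by
  rw [gtGraph_eq_gtCut_sup_edge ht, gtCut, gtu1, gtu2,
    wiener_thickPath gadget_connected gadget_adj_zero_one exists_gtLevel_eq_iff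
      (gtLevel_eq_top_iff ht) (gtLevel_eq_zero_iff ht),
    sum_sum_gtLevel_sub_eq_sum_diamondExcess,
    sum_sum_diamondExcess]

end Cut

/-- For every `t ≥ 1`, the graph `G_t − u₁` is connected and
`W(G_t − u₁) − W(G_t) = 16t³ − 8t² − 26t − 14`. -/
theorem gt_deleteVertex_u1_wiener (t : ℕ) (ht : 1 ≤ t) :
    (deleteVertex (GtGraph t) (gtu1 t ht)).Connected ∧
    (wiener (deleteVertex (GtGraph t) (gtu1 t ht)) : ℤ) - (wiener (GtGraph t) : ℤ)
      = 16 * (t : ℤ) ^ 3 - 8 * (t : ℤ) ^ 2 - 26 * (t : ℤ) - 14 := by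
  have : Nontrivial (GtV t) := Sum.inr_injective.nontrivial
  have hclique := isClique_neighborSet_gtCut_gtu1 ht
  have hdel : deleteVertex (GtGraph t) (gtu1 t ht) = deleteVertex (gtCut t) (gtu1 t ht) := by
    rw [gtGraph_eq_gtCut_sup_edge ht, deleteVertex_sup_edge]
  have hW : wiener (deleteVertex (gtCut t) (gtu1 t ht)) + (24 * t ^ 2 + 28 * t + 14) =
      wiener (GtGraph t) + 2 * (8 * t ^ 3 + 8 * t ^ 2 + t) := by
    rw [← sum_dist_gtCut_gtu1 ht, ← wiener_gtCut ht]
    exact wiener_deleteVertex_add_sum_dist (gtCut_connected t) hclique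
  rw [hdel]
  refine ⟨connected_deleteVertex_of_isClique_neighborSet (gtCut_connected t) hclique, ?_⟩
  zify at hW
  linarith
end

section
/- Fix an integer r ≥ 1. Then W(G_{t,r} − u_1) − W(G_{t,r}) tends to infinity as t → ∞; that is, for every integer M there exists t_0 such that for all t ≥ t_0, the graph G_{t,r} − u_1 is connected and W(G_{t,r} − u_1) − W(G_{t,r}) ≥ M. -/
open SimpleGraph Finset

/-! ### The graph `G_{t,r}`

`G_{t,r}` consists of `2^(r-1)` chains of `2t` diamonds, two complete binary trees
`B, B'` of depth `r − 1` whose leaves are identified with the endpoints of the chains,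
and the 8-vertex graph `F` (two adjacent vertices `z₁, z₂`, a 4-cycle `p₁ p₂ p₃ p₄`
with opposite vertices `p₁, p₃` joined to `z₁, z₂`, and leaves `w₁, w₂` attached to
`p₂, p₄`), with the roots of `B, B'` joined to `z₁, z₂` respectively.

Encoding: a chain vertex is `Sum.inl (k, j, a)` where `k` is the chain, `j` the
diamond, and `a ∈ Fin 4` names `A_j, B_j, C_j, D_j` (with `A_j, B_j` of degree 2 in the
diamond); the leaf `a_k` of `B` is identified with `A_0` of chain `k`, and the leaf
`a'_k` of `B'` with `B_{2t−1}` of chain `k`.  The *internal* (non-leaf) vertices of `B`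
and `B'` are `Sum.inr (Sum.inl (Sum.inl i))` and `Sum.inr (Sum.inl (Sum.inr i))`,
`i : Fin (2^(r-1) − 1)`, representing the node with heap index `i + 1` of a complete
binary tree whose leaves have heap indices `2^(r-1), …, 2^r − 1` (leaf `a_k` having
heap index `k + 2^(r-1)`).  The vertices `z₁ z₂ p₁ p₂ p₃ p₄ w₁ w₂` of `F` are
`Sum.inr (Sum.inr m)` for `m = 0, …, 7`.  When `r = 1` the trees have no internal
vertices and their roots are the leaves `a_1, a'_1` themselves, so `z₁, z₂` are joined
directly to the endpoints of the single chain. -/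

/-- The vertex type of `G_{t,r}`. -/
abbrev GtrV (t r : ℕ) : Type :=
  (Fin (2 ^ (r - 1)) × Fin (2 * t) × Fin 4) ⊕
    ((Fin (2 ^ (r - 1) - 1) ⊕ Fin (2 ^ (r - 1) - 1)) ⊕ Fin 8)

/-- The base edge relation of `G_{t,r}` (symmetrized by `SimpleGraph.fromRel`). -/
def gtrRel (t r : ℕ) : GtrV t r → GtrV t r → Prop
  | Sum.inl (k, j, a), Sum.inl (k', j', b) =>
      -- edges within chain `k`: diamond edges and connecting edges `B_j A_{j+1}`
      k = k' ∧ ((j = j' ∧ diamondRel a b) ∨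
        ((j' : ℕ) = (j : ℕ) + 1 ∧ (a : ℕ) = 1 ∧ (b : ℕ) = 0))
  | Sum.inr (Sum.inl (Sum.inl i)), Sum.inr (Sum.inl (Sum.inl i')) =>
      -- internal edges of `B`: heap node `i+1` to its children `2(i+1)`, `2(i+1)+1`
      (i' : ℕ) + 1 = 2 * ((i : ℕ) + 1) ∨ (i' : ℕ) + 1 = 2 * ((i : ℕ) + 1) + 1
  | Sum.inr (Sum.inl (Sum.inr i)), Sum.inr (Sum.inl (Sum.inr i')) =>
      -- internal edges of `B'`
      (i' : ℕ) + 1 = 2 * ((i : ℕ) + 1) ∨ (i' : ℕ) + 1 = 2 * ((i : ℕ) + 1) + 1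
  | Sum.inr (Sum.inl (Sum.inl i)), Sum.inl (k, j, a) =>
      -- edges of `B` to its leaves: leaf `a_k = A_0` of chain `k` has heap index
      -- `k + 2^(r-1)`
      ((k : ℕ) + 2 ^ (r - 1) = 2 * ((i : ℕ) + 1) ∨
        (k : ℕ) + 2 ^ (r - 1) = 2 * ((i : ℕ) + 1) + 1) ∧ (j : ℕ) = 0 ∧ (a : ℕ) = 0
  | Sum.inr (Sum.inl (Sum.inr i)), Sum.inl (k, j, a) =>
      -- edges of `B'` to its leaves: leaf `a'_k = B_{2t−1}` of chain `k`
      ((k : ℕ) + 2 ^ (r - 1) = 2 * ((i : ℕ) + 1) ∨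
        (k : ℕ) + 2 ^ (r - 1) = 2 * ((i : ℕ) + 1) + 1) ∧
        (j : ℕ) = 2 * t - 1 ∧ (a : ℕ) = 1
  | Sum.inr (Sum.inr m), Sum.inr (Sum.inl (Sum.inl i)) =>
      -- the edge from `z₁` to the root of `B` (when the root is internal, i.e. `r ≥ 2`)
      (m : ℕ) = 0 ∧ (i : ℕ) = 0
  | Sum.inr (Sum.inr m), Sum.inr (Sum.inl (Sum.inr i)) =>
      -- the edge from `z₂` to the root of `B'` (when `r ≥ 2`)
      (m : ℕ) = 1 ∧ (i : ℕ) = 0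
  | Sum.inr (Sum.inr m), Sum.inl (k, j, a) =>
      -- when `r = 1`, the roots of `B, B'` are the leaves `a_1, a'_1`, so `z₁, z₂`
      -- are joined directly to the endpoints of the unique chain
      (2 ^ (r - 1) = 1 ∧ (k : ℕ) = 0) ∧
        (((m : ℕ) = 0 ∧ (j : ℕ) = 0 ∧ (a : ℕ) = 0) ∨
          ((m : ℕ) = 1 ∧ (j : ℕ) = 2 * t - 1 ∧ (a : ℕ) = 1))
  | Sum.inr (Sum.inr m), Sum.inr (Sum.inr m') =>
      -- the edges of `F`: `z₁z₂, z₁p₁, z₂p₃, p₁p₂, p₂p₃, p₃p₄, p₄p₁, p₂w₁, p₄w₂`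
      ((m : ℕ) = 0 ∧ (m' : ℕ) = 1) ∨ ((m : ℕ) = 0 ∧ (m' : ℕ) = 2) ∨
      ((m : ℕ) = 1 ∧ (m' : ℕ) = 4) ∨ ((m : ℕ) = 2 ∧ (m' : ℕ) = 3) ∨
      ((m : ℕ) = 3 ∧ (m' : ℕ) = 4) ∨ ((m : ℕ) = 4 ∧ (m' : ℕ) = 5) ∨
      ((m : ℕ) = 5 ∧ (m' : ℕ) = 2) ∨ ((m : ℕ) = 3 ∧ (m' : ℕ) = 6) ∨
      ((m : ℕ) = 5 ∧ (m' : ℕ) = 7)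
  | _, _ => False

/-- The graph `G_{t,r}`. -/
def GtrGraph (t r : ℕ) : SimpleGraph (GtrV t r) := SimpleGraph.fromRel (gtrRel t r)

/-- The central vertex `u₁ = B_{t−1}` of the first chain of `G_{t,r}`: an endpoint of
the edge joining the `t`-th and `(t+1)`-st diamond of that chain. -/
def gtru1 (t r : ℕ) (ht : 1 ≤ t) : GtrV t r :=
  Sum.inl (⟨0, by positivity⟩, ⟨t - 1, by omega⟩, 1)

/-!
Let `N = 2 ^ (r - 1)`, and measure the effect of deleting `u₁` on ordinary distances.  No distance
decreases, and the distances lost with `u₁` itself add up to at most `|V|² = O(N² t²)`.  On the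
other hand, take a diamond at distance about `i` before `u₁` and one at distance about `j` after it
in the same chain.  In `G_{t,r}` they are joined through `u₁` by a path of length `3 (i + j + 1)`,
whereas in `G_{t,r} - u₁` one has to leave the chain at one end and come back at the other, which
costs at least `2t - 2 - i - j`.  For `i, j < t / 8` this is a gain of at least `t`, so these
`(t / 8)²` pairs together gain order `t³`, which beats `O(N² t²)`.
-/

/-! ### Distances and connectivity -/

section General

variable {V W : Type*} {G : SimpleGraph V}

theorem dist_le_card [Fintype V] (a b : V) : G.dist a b ≤ Fintype.card V := by
  by_cases h : G.Reachable a b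
  · obtain ⟨p, hp, hlen⟩ := h.exists_path_of_dist
    exact hlen ▸ hp.length_lt.le
  · simp [dist_eq_zero_of_not_reachable h]

theorem sum_dist_le_card_sq [Fintype V] (a : V) : ∑ b, G.dist a b ≤ Fintype.card V ^ 2 := by
  calc ∑ b, G.dist a b ≤ ∑ _b : V, Fintype.card V := sum_le_sum fun b _ ↦ dist_le_card a b
    _ = Fintype.card V ^ 2 := by simp [sq]

theorem dist_map_le {H : SimpleGraph W} (φ : G →g H) {a b : V} (h : G.Reachable a b) :
    H.dist (φ a) (φ b) ≤ G.dist a b := by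
  obtain ⟨p, hp⟩ := h.exists_walk_length_eq_dist
  calc H.dist (φ a) (φ b) ≤ (p.map φ).length := dist_le _
    _ = G.dist a b := by rw [Walk.length_map, hp]

section Lipschitz

variable {R : Type*} [Ring R] [PartialOrder R] [IsOrderedRing R] {f : V → R}

theorem sub_le_walk_length (hf : ∀ a b, G.Adj a b → f b - f a ≤ 1) {a b : V} (p : G.Walk a b) :
    f b - f a ≤ p.length := by
  induction p with
  | nil => simp
  | @cons a c b hac p ih =>
    calc f b - f a = (f b - f c) + (f c - f a) := (sub_add_sub_cancel ..).symm
      _ ≤ p.length + 1 := add_le_add ih (hf a c hac)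
      _ = (Walk.cons hac p).length := by simp

theorem sub_le_dist (hf : ∀ a b, G.Adj a b → f b - f a ≤ 1) {a b : V} (h : G.Reachable a b) :
    f b - f a ≤ G.dist a b := by
  obtain ⟨p, hp⟩ := h.exists_walk_length_eq_dist
  exact hp ▸ sub_le_walk_length hf p

end Lipschitz

/-- The component of `a` in `G - x`, regarded as a set of vertices of `G` so that one can argue
with adjacency in `G` rather than in a subtype.  It is empty when `a = x`. -/
def componentAvoiding (G : SimpleGraph V) (x a : V) : Set V :=
  {b | ∃ (ha : a ≠ x) (hb : b ≠ x), (deleteVertex G x).Reachable ⟨a, ha⟩ ⟨b, hb⟩}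

variable {x a b c : V}

theorem self_mem_componentAvoiding (ha : a ≠ x) : a ∈ componentAvoiding G x a :=
  ⟨ha, ha, Reachable.rfl⟩

theorem mem_componentAvoiding_of_adj (hb : b ∈ componentAvoiding G x a) (hbc : G.Adj b c)
    (hc : c ≠ x) : c ∈ componentAvoiding G x a := by
  obtain ⟨ha, hb, hab⟩ := hb
  have hbc' : (deleteVertex G x).Adj ⟨b, hb⟩ ⟨c, hc⟩ := hbc
  exact ⟨ha, hc, hab.trans hbc'.reachable⟩

theorem deleteVertex_connected_of_forall_mem (ha : a ≠ x)
    (h : ∀ b, b ≠ x → b ∈ componentAvoiding G x a) : (deleteVertex G x).Connected :=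
  connected_iff_exists_forall_reachable _ |>.2 ⟨⟨a, ha⟩, fun b ↦ (h b b.2).2.2⟩

end General

/-! ### The Wiener index of a vertex-deleted subgraph -/

section Wiener

variable {V : Type*}

theorem sum_sum_ite_mem_and_mem {α β M : Type*} [Fintype α] [Fintype β] [DecidableEq α]
    [DecidableEq β] [AddCommMonoid M] (A : Finset α) (B : Finset β) (c : M) :
    ∑ a, ∑ b, (if a ∈ A ∧ b ∈ B then c else 0) = (#A * #B) • c := by
  simp [ite_and, mul_smul]

variable [Fintype V] {G : SimpleGraph V} {v : V}

theorem wiener_eq_add_sum_dist (G : SimpleGraph V) (v : V) :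
    wiener G = (∑ a : {u // u ≠ v}, ∑ b : {u // u ≠ v}, G.dist a b) / 2 + ∑ b, G.dist v b := by
  classical
  have split (f : V → ℕ) : ∑ a, f a = f v + ∑ a : {u // u ≠ v}, f a := by
    rw [Fintype.sum_eq_add_sum_subtype_ne f v]
    congr!
  have transmission : ∑ b, G.dist v b = ∑ a : {u // u ≠ v}, G.dist a v := by
    simp [split, dist_comm (u := v)]
  have double_sum : ∑ a, ∑ b, G.dist a b =
      (∑ a : {u // u ≠ v}, ∑ b : {u // u ≠ v}, G.dist a b) + 2 * ∑ b, G.dist v b := by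
    rw [split, sum_congr rfl fun _ _ ↦ split _, sum_add_distrib, ← transmission]
    ring
  rw [wiener, double_sum]
  omega

/-- The interaction of `A` and `B` is counted in both orders; a vertex in both sets would force
`T = 0`, so disjointness comes for free. -/
theorem wiener_add_card_mul_card_mul_le (hconn : (deleteVertex G v).Connected)
    {A B : Finset {u // u ≠ v}} {T : ℕ}
    (hAB : ∀ a ∈ A, ∀ b ∈ B, G.dist a b + T ≤ (deleteVertex G v).dist a b) :
    wiener G + #A * #B * T ≤ wiener (deleteVertex G v) + ∑ b, G.dist v b := by
  classical
  have pointwise (a b : {u // u ≠ v}) :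
      G.dist a b + ((if a ∈ A ∧ b ∈ B then T else 0) + if a ∈ B ∧ b ∈ A then T else 0) ≤
        (deleteVertex G v).dist a b := by
    have mono : G.dist a b ≤ (deleteVertex G v).dist a b :=
      dist_map_le (Embedding.induce _).toHom (hconn a b)
    have overlap (ha : a ∈ A) (ha' : a ∈ B) : T = 0 := by simpa using hAB a ha a ha'
    split_ifs with h h' h'
    · simpa [overlap h.1 h'.1] using mono
    · simpa using hAB a h.1 b h.2
    · simpa [dist_comm] using hAB b h'.2 a h'.1
    · simpa using mono
  have total := sum_le_sum fun a (_ : a ∈ univ) ↦ sum_le_sum fun b (_ : b ∈ univ) ↦ pointwise a b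
  simp only [sum_add_distrib, sum_sum_ite_mem_and_mem, smul_eq_mul, mul_comm #B #A] at total
  rw [wiener_eq_add_sum_dist G v, wiener]
  omega

end Wiener

/-! ### Heap-indexed binary trees -/

section Heap

/-- Heap indices start at `1`: node number `i` has heap index `i + 1`. -/
theorem exists_heap_parent {m n : ℕ} (hm : 0 < m) (hmn : m ≤ 2 * n) :
    ∃ i : Fin n, m + 1 = 2 * ((i : ℕ) + 1) ∨ m + 1 = 2 * ((i : ℕ) + 1) + 1 :=
  ⟨⟨(m + 1) / 2 - 1, by omega⟩, by grind⟩

theorem heap_induction {n : ℕ} {P : Fin n → Prop} (root : ∀ i : Fin n, (i : ℕ) = 0 → P i)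
    (child : ∀ i c : Fin n,
      (c : ℕ) + 1 = 2 * ((i : ℕ) + 1) ∨ (c : ℕ) + 1 = 2 * ((i : ℕ) + 1) + 1 → P i → P c)
    (i : Fin n) : P i := by
  induction i using WellFoundedLT.induction with
  | ind i ih =>
    obtain hi | hi := Nat.eq_zero_or_pos i
    · exact root i hi
    · obtain ⟨p, hp⟩ := exists_heap_parent hi (n := n) (by omega)
      exact child p i hp (ih p (Fin.lt_def.2 (by omega)))

end Heap

/-! ### The graph `G_{t,r}` -/

namespace GtrGraph

variable {t r : ℕ}

/-- The vertex named `a` (`A, B, C, D` being `0, 1, 2, 3`) of the `j`-th diamond of the `k`-th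
chain. -/
abbrev chainVertex (k : Fin (2 ^ (r - 1))) (j : Fin (2 * t)) (a : Fin 4) : GtrV t r :=
  Sum.inl (k, j, a)

/-- The internal vertex of the tree `B` with heap index `i + 1`. -/
abbrev treeVertex (i : Fin (2 ^ (r - 1) - 1)) : GtrV t r := Sum.inr (Sum.inl (Sum.inl i))

/-- The internal vertex of the tree `B'` with heap index `i + 1`. -/
abbrev treeVertex' (i : Fin (2 ^ (r - 1) - 1)) : GtrV t r := Sum.inr (Sum.inl (Sum.inr i))

/-- The `m`-th vertex of `F`, in the order `z₁ z₂ p₁ p₂ p₃ p₄ w₁ w₂`. -/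
abbrev fVertex (m : Fin 8) : GtrV t r := Sum.inr (Sum.inr m)

theorem card_gtrV_le (ht : 1 ≤ t) : Fintype.card (GtrV t r) ≤ 16 * 2 ^ (r - 1) * t := by
  have hN : 1 ≤ 2 ^ (r - 1) := Nat.one_le_two_pow
  simp only [GtrV, Fintype.card_sum, Fintype.card_prod, Fintype.card_fin]
  generalize 2 ^ (r - 1) = N at *
  have : N ≤ N * t := Nat.le_mul_of_pos_right _ ht
  grind

theorem gtrRel_irrefl (v : GtrV t r) : ¬gtrRel t r v v := by
  rcases v with ⟨k, j, a⟩ | (i | i) | m <;> simp only [gtrRel, diamondRel] <;> omega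

theorem adj_of_gtrRel {u v : GtrV t r} (h : gtrRel t r u v) : (GtrGraph t r).Adj u v :=
  (fromRel_adj ..).2 ⟨fun huv ↦ gtrRel_irrefl v (huv ▸ h), Or.inl h⟩

theorem adj_chainVertex_two (k : Fin (2 ^ (r - 1))) (j : Fin (2 * t)) {a : Fin 4} (ha : a ≠ 2) :
    (GtrGraph t r).Adj (chainVertex k j a) (chainVertex k j 2) := by
  obtain rfl | ha3 := eq_or_ne a 3
  · have hCD : diamondRel 2 3 := by simp [diamondRel]
    exact Adj.symm (adj_of_gtrRel ⟨rfl, Or.inl ⟨rfl, hCD⟩⟩)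
  · exact adj_of_gtrRel ⟨rfl, Or.inl ⟨rfl, by simp only [diamondRel]; omega⟩⟩

theorem adj_chainVertex_succ (k : Fin (2 ^ (r - 1))) {j j' : Fin (2 * t)}
    (h : (j' : ℕ) = (j : ℕ) + 1) : (GtrGraph t r).Adj (chainVertex k j 1) (chainVertex k j' 0) :=
  adj_of_gtrRel ⟨rfl, Or.inr ⟨h, rfl, rfl⟩⟩

theorem exists_chain_walk (k : Fin (2 ^ (r - 1))) (n : ℕ) {j j' : Fin (2 * t)}
    (h : (j' : ℕ) = j + n) :
    ∃ p : (GtrGraph t r).Walk (chainVertex k j 0) (chainVertex k j' 0), p.length = 3 * n := by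
  induction n generalizing j with
  | zero =>
    obtain rfl : j' = j := Fin.ext h
    exact ⟨Walk.nil, rfl⟩
  | succ n ih =>
    obtain ⟨p, hp⟩ := ih (j := ⟨j + 1, by omega⟩) (by grind)
    refine ⟨.cons (adj_chainVertex_two k j (a := 0) (by decide)) <|
      .cons (adj_chainVertex_two k j (a := 1) (by decide)).symm <|
      .cons (adj_chainVertex_succ k rfl) p, ?_⟩
    simp only [Walk.length_cons, hp]
    ring

/-! ### Connectivity of `G_{t,r} - u₁` -/

section Connectivity

/-- The vertices of `G_{t,r} - u₁` that can be reached from `z₁`. -/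
abbrev zComponent (ht : 1 ≤ t) : Set (GtrV t r) :=
  componentAvoiding (GtrGraph t r) (gtru1 t r ht) (fVertex 0)

variable (ht : 1 ≤ t) (k : Fin (2 ^ (r - 1)))

theorem inr_ne_gtru1 (x : (Fin (2 ^ (r - 1) - 1) ⊕ Fin (2 ^ (r - 1) - 1)) ⊕ Fin 8) :
    Sum.inr x ≠ gtru1 t r ht :=
  Sum.inr_ne_inl

theorem chainVertex_ne_gtru1 {j : Fin (2 * t)} {a : Fin 4}
    (h : ¬((k : ℕ) = 0 ∧ (j : ℕ) = t - 1 ∧ a = 1)) : chainVertex k j a ≠ gtru1 t r ht := by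
  simpa only [gtru1, ne_eq, Sum.inl.injEq, Prod.mk.injEq, Fin.ext_iff (n := 2 ^ (r - 1)),
    Fin.ext_iff (n := 2 * t)] using h

theorem fVertex_mem_zComponent (m : Fin 8) : fVertex m ∈ zComponent (r := r) ht := by
  have step {m m' : Fin 8} (hm : fVertex m ∈ zComponent (r := r) ht)
      (h : gtrRel t r (fVertex m) (fVertex m')) : fVertex m' ∈ zComponent (r := r) ht :=
    mem_componentAvoiding_of_adj hm (adj_of_gtrRel h) (inr_ne_gtru1 ht _)
  have z₁ : fVertex 0 ∈ zComponent (r := r) ht := self_mem_componentAvoiding (inr_ne_gtru1 ht _)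
  have z₂ := step (m' := 1) z₁ (by simp [gtrRel])
  have p₁ := step (m' := 2) z₁ (by simp [gtrRel])
  have p₂ := step (m' := 3) p₁ (by simp [gtrRel])
  have p₃ := step (m' := 4) p₂ (by simp [gtrRel])
  have p₄ := step (m' := 5) p₃ (by simp [gtrRel])
  have w₁ := step (m' := 6) p₂ (by simp [gtrRel])
  have w₂ := step (m' := 7) p₄ (by simp [gtrRel])
  fin_cases m <;> assumption

theorem treeVertex_mem_zComponent (i : Fin (2 ^ (r - 1) - 1)) :
    treeVertex i ∈ zComponent (r := r) ht := by
  induction i using heap_induction with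
  | root i hi =>
    exact mem_componentAvoiding_of_adj (fVertex_mem_zComponent ht 0)
      (adj_of_gtrRel ⟨rfl, hi⟩) (inr_ne_gtru1 ht _)
  | child i c hc ih =>
    exact mem_componentAvoiding_of_adj ih (adj_of_gtrRel hc) (inr_ne_gtru1 ht _)

theorem treeVertex'_mem_zComponent (i : Fin (2 ^ (r - 1) - 1)) :
    treeVertex' i ∈ zComponent (r := r) ht := by
  induction i using heap_induction with
  | root i hi =>
    exact mem_componentAvoiding_of_adj (fVertex_mem_zComponent ht 1)
      (adj_of_gtrRel ⟨rfl, hi⟩) (inr_ne_gtru1 ht _)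
  | child i c hc ih =>
    exact mem_componentAvoiding_of_adj ih (adj_of_gtrRel hc) (inr_ne_gtru1 ht _)

theorem exists_leaf_parent (hN : 2 ^ (r - 1) ≠ 1) :
    ∃ i : Fin (2 ^ (r - 1) - 1), (k : ℕ) + 2 ^ (r - 1) = 2 * ((i : ℕ) + 1) ∨
      (k : ℕ) + 2 ^ (r - 1) = 2 * ((i : ℕ) + 1) + 1 := by
  have hk : (k : ℕ) < 2 ^ (r - 1) := k.2
  obtain ⟨i, hi⟩ := exists_heap_parent (m := k + (2 ^ (r - 1) - 1)) (n := 2 ^ (r - 1) - 1)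
    (by omega) (by omega)
  exact ⟨i, by omega⟩

theorem first_chainVertex_mem_zComponent {j : Fin (2 * t)} (hj : (j : ℕ) = 0) :
    chainVertex k j 0 ∈ zComponent ht := by
  have hne : chainVertex k j 0 ≠ gtru1 t r ht := chainVertex_ne_gtru1 ht k (by simp)
  by_cases hN : 2 ^ (r - 1) = 1
  · exact mem_componentAvoiding_of_adj (fVertex_mem_zComponent ht 0)
      (adj_of_gtrRel ⟨⟨hN, by omega⟩, Or.inl ⟨rfl, hj, rfl⟩⟩) hne
  · obtain ⟨i, hi⟩ := exists_leaf_parent k hN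
    exact mem_componentAvoiding_of_adj (treeVertex_mem_zComponent ht i)
      (adj_of_gtrRel ⟨hi, hj, rfl⟩) hne

theorem last_chainVertex_mem_zComponent {j : Fin (2 * t)} (hj : (j : ℕ) = 2 * t - 1) :
    chainVertex k j 1 ∈ zComponent ht := by
  have hne : chainVertex k j 1 ≠ gtru1 t r ht := chainVertex_ne_gtru1 ht k (by omega)
  by_cases hN : 2 ^ (r - 1) = 1
  · exact mem_componentAvoiding_of_adj (fVertex_mem_zComponent ht 1)
      (adj_of_gtrRel ⟨⟨hN, by omega⟩, Or.inr ⟨rfl, hj, rfl⟩⟩) hne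
  · obtain ⟨i, hi⟩ := exists_leaf_parent k hN
    exact mem_componentAvoiding_of_adj (treeVertex'_mem_zComponent ht i)
      (adj_of_gtrRel ⟨hi, hj, rfl⟩) hne

/-- `C_j` is adjacent to the other three vertices of its diamond and is never deleted. -/
theorem chainVertex_mem_zComponent_of_mem {j : Fin (2 * t)} {a b : Fin 4}
    (ha : chainVertex k j a ∈ zComponent ht) (hb : chainVertex k j b ≠ gtru1 t r ht) :
    chainVertex k j b ∈ zComponent ht := by
  have hC : chainVertex k j 2 ∈ zComponent ht := by
    obtain rfl | ha2 := eq_or_ne a 2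
    · exact ha
    · exact mem_componentAvoiding_of_adj ha (adj_chainVertex_two k j ha2)
        (chainVertex_ne_gtru1 ht k (by simp))
  obtain rfl | hb2 := eq_or_ne b 2
  · exact hC
  · exact mem_componentAvoiding_of_adj hC (adj_chainVertex_two k j hb2).symm hb

theorem chainVertex_zero_mem_zComponent {j : Fin (2 * t)} (hj : (k : ℕ) = 0 → (j : ℕ) < t) :
    chainVertex k j 0 ∈ zComponent ht := by
  obtain ⟨n, hn⟩ := j
  induction n with
  | zero => exact first_chainVertex_mem_zComponent ht k rfl
  | succ n ih =>
    have hA := ih (by omega) (by grind)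
    have hB := chainVertex_mem_zComponent_of_mem ht k hA
      (chainVertex_ne_gtru1 ht k (a := 1) (by grind))
    exact mem_componentAvoiding_of_adj hB (adj_chainVertex_succ k rfl)
      (chainVertex_ne_gtru1 ht k (by simp))

theorem chainVertex_one_mem_zComponent {j : Fin (2 * t)} (hj : t ≤ j) :
    chainVertex k j 1 ∈ zComponent ht := by
  obtain ⟨n, hn⟩ := j
  induction Nat.le_sub_one_of_lt hn using Nat.decreasingInduction with
  | self => exact last_chainVertex_mem_zComponent ht k rfl
  | of_succ n hn' ih =>
    have hB := ih (by omega) (by grind)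
    have hA := chainVertex_mem_zComponent_of_mem ht k hB
      (chainVertex_ne_gtru1 ht k (a := 0) (by simp))
    exact mem_componentAvoiding_of_adj hA (adj_chainVertex_succ k rfl).symm
      (chainVertex_ne_gtru1 ht k (by grind))

theorem connected_deleteVertex_gtru1 :
    (deleteVertex (GtrGraph t r) (gtru1 t r ht)).Connected := by
  refine deleteVertex_connected_of_forall_mem (inr_ne_gtru1 ht (Sum.inr 0)) ?_
  rintro (⟨k, j, a⟩ | (i | i) | m) hne
  · by_cases hj : (k : ℕ) = 0 → (j : ℕ) < t
    · exact chainVertex_mem_zComponent_of_mem ht k (chainVertex_zero_mem_zComponent ht k hj) hne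
    · exact chainVertex_mem_zComponent_of_mem ht k
        (chainVertex_one_mem_zComponent ht k (by omega)) hne
  · exact treeVertex_mem_zComponent ht i
  · exact treeVertex'_mem_zComponent ht i
  · exact fVertex_mem_zComponent ht m

end Connectivity

/-! ### Distances across the cut -/

/-- A potential on `G_{t,r} - u₁` for bounding distances from below: up to sign, the number of the
diamond counted from the nearer end of the chain containing `u₁`, negative on the half before `u₁`
and positive on the half after it, and zero off that chain.  Only the deleted vertex `u₁` has an
edge across which it varies by more than one. -/
def cutPotential (t r : ℕ) : GtrV t r → ℤ
  | Sum.inl (k, j, _) =>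
      if (k : ℕ) = 0 then if (j : ℕ) < t then -(j : ℤ) else 2 * t - 1 - j else 0
  | Sum.inr _ => 0

theorem abs_cutPotential_sub_le_one_of_gtrRel (ht : 1 ≤ t) {u v : GtrV t r}
    (hu : u ≠ gtru1 t r ht) (h : gtrRel t r u v) :
    |cutPotential t r v - cutPotential t r u| ≤ 1 := by
  rcases u with ⟨k, j, a⟩ | (i | i) | m <;> rcases v with ⟨k', j', a'⟩ | (i' | i') | m' <;>
    simp only [gtrRel] at h <;> simp only [cutPotential, abs_le]
  case inl.inl =>
    obtain ⟨rfl, ⟨rfl, -⟩ | ⟨hj, ha, -⟩⟩ := h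
    · simp
    · have hcut : ¬((k : ℕ) = 0 ∧ (j : ℕ) = t - 1) := fun ⟨hk, hj⟩ ↦
        hu (by simp [gtru1, Fin.ext_iff, hk, hj, ha])
      split_ifs <;> omega
  all_goals first | (simp; done) | split_ifs <;> omega

theorem cutPotential_sub_le_one_of_adj (ht : 1 ≤ t) {u v : {w : GtrV t r // w ≠ gtru1 t r ht}}
    (h : (deleteVertex (GtrGraph t r) (gtru1 t r ht)).Adj u v) :
    cutPotential t r v - cutPotential t r u ≤ 1 := by
  obtain ⟨-, huv | hvu⟩ : (u : GtrV t r) ≠ v ∧ (gtrRel t r u v ∨ gtrRel t r v u) := h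
  · exact (abs_le.1 (abs_cutPotential_sub_le_one_of_gtrRel ht u.2 huv)).2
  · linarith [(abs_le.1 (abs_cutPotential_sub_le_one_of_gtrRel ht v.2 hvu)).1]

section Gain

variable {s : ℕ}

/-- The vertices `A_{t-1-i}`, `i < s`, in the chain of `u₁`: the last `s` before the cut.
Truncated subtraction makes this meaningful only for `s ≤ t`. -/
def beforeCut (r : ℕ) (ht : 1 ≤ t) : Fin s → {w : GtrV t r // w ≠ gtru1 t r ht} := fun i ↦
  ⟨chainVertex ⟨0, by positivity⟩ ⟨t - 1 - i, by omega⟩ 0, by simp [gtru1]⟩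

/-- The vertices `A_{t+i}`, `i < s`, in the chain of `u₁`: the first `s` after the cut. -/
def afterCut (r : ℕ) (ht : 1 ≤ t) (hs : s ≤ t) : Fin s → {w : GtrV t r // w ≠ gtru1 t r ht} :=
  fun i ↦ ⟨chainVertex ⟨0, by positivity⟩ ⟨t + i, by omega⟩ 0, by simp [gtru1]⟩

variable (r) (ht : 1 ≤ t)

theorem cutPotential_beforeCut (hs : s ≤ t) (i : Fin s) :
    cutPotential t r (beforeCut r ht i) = i + 1 - t := by
  have hi : t - 1 - (i : ℕ) < t := by omega
  simp only [cutPotential, beforeCut, if_true, if_pos hi]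
  omega

theorem beforeCut_injective (hs : s ≤ t) : Function.Injective (beforeCut (s := s) r ht) := by
  intro i j h
  have hpot := congrArg (fun w ↦ cutPotential t r w.1) h
  simp only [cutPotential_beforeCut r ht hs] at hpot
  omega

variable (hs : s ≤ t) (i j : Fin s)

theorem cutPotential_afterCut : cutPotential t r (afterCut r ht hs j) = t - 1 - j := by
  simp only [cutPotential, afterCut, if_true, if_neg (Nat.not_lt.2 (Nat.le_add_right t j))]
  omega

theorem afterCut_injective : Function.Injective (afterCut r ht hs) := by
  intro i j h
  have hpot := congrArg (fun w ↦ cutPotential t r w.1) h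
  simp only [cutPotential_afterCut] at hpot
  omega

theorem dist_beforeCut_afterCut_le :
    (GtrGraph t r).dist (beforeCut r ht i) (afterCut r ht hs j) ≤ 3 * (i + j + 1) := by
  obtain ⟨p, hp⟩ := exists_chain_walk (t := t) (r := r) ⟨0, by positivity⟩ (i + j + 1)
    (j := ⟨t - 1 - i, by omega⟩) (j' := ⟨t + j, by omega⟩) (by grind)
  exact hp ▸ dist_le p

theorem le_dist_deleteVertex_beforeCut_afterCut :
    2 * (t : ℤ) - 2 - i - j ≤ (deleteVertex (GtrGraph t r) (gtru1 t r ht)).dist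
      (beforeCut r ht i) (afterCut r ht hs j) := by
  have lower := sub_le_dist (fun _ _ ↦ cutPotential_sub_le_one_of_adj ht)
    (connected_deleteVertex_gtru1 ht (beforeCut r ht i) (afterCut r ht hs j))
  rw [cutPotential_beforeCut r ht hs, cutPotential_afterCut] at lower
  linarith

theorem wiener_add_le_wiener_deleteVertex_gtru1 (hs : 8 * s ≤ t) :
    wiener (GtrGraph t r) + s * s * t ≤
      wiener (deleteVertex (GtrGraph t r) (gtru1 t r ht)) + (16 * 2 ^ (r - 1) * t) ^ 2 := by
  have hst : s ≤ t := by omega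
  let before := univ.map ⟨beforeCut (s := s) r ht, beforeCut_injective r ht hst⟩
  let after := univ.map ⟨afterCut r ht hst, afterCut_injective r ht hst⟩
  have gain : ∀ a ∈ before, ∀ b ∈ after, (GtrGraph t r).dist a b + t ≤
      (deleteVertex (GtrGraph t r) (gtru1 t r ht)).dist a b := by
    simp only [before, after, forall_mem_map, Function.Embedding.coeFn_mk]
    intro i _ j _
    have short := dist_beforeCut_afterCut_le r ht hst i j
    have long := le_dist_deleteVertex_beforeCut_afterCut r ht hst i j
    omega
  calc wiener (GtrGraph t r) + s * s * t
      ≤ wiener (deleteVertex (GtrGraph t r) (gtru1 t r ht)) +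
          ∑ b, (GtrGraph t r).dist (gtru1 t r ht) b := by
        simpa [before, after] using
          wiener_add_card_mul_card_mul_le (connected_deleteVertex_gtru1 ht) gain
    _ ≤ _ := by
        gcongr
        exact (sum_dist_le_card_sq _).trans (Nat.pow_le_pow_left (card_gtrV_le ht) 2)

end Gain

end GtrGraph

/-- Fix `r ≥ 1`.  Then `W(G_{t,r} − u₁) − W(G_{t,r}) → ∞` as
`t → ∞`: for every integer `M` there is `t₀ ≥ 1` such that for all `t ≥ t₀` the graph
`G_{t,r} − u₁` is connected and `W(G_{t,r} − u₁) − W(G_{t,r}) ≥ M`. -/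
theorem gtr_wiener_difference_tendsto_atTop (r : ℕ) (hr : 1 ≤ r) (M : ℤ) :
    ∃ t₀ : ℕ, 1 ≤ t₀ ∧ ∀ t : ℕ, t₀ ≤ t → ∀ ht : 1 ≤ t,
      (deleteVertex (GtrGraph t r) (gtru1 t r ht)).Connected ∧
      M ≤ (wiener (deleteVertex (GtrGraph t r) (gtru1 t r ht)) : ℤ)
            - (wiener (GtrGraph t r) : ℤ) := by
  set C := (240 * 2 ^ (r - 1)) ^ 2 with hC
  refine ⟨C + M.natAbs + 8, by omega, fun t h₀ ht ↦
    ⟨GtrGraph.connected_deleteVertex_gtru1 ht, ?_⟩⟩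
  set s := t / 8
  have hs : 1 ≤ s * s := Nat.mul_pos (by omega) (by omega)
  have loss : (16 * 2 ^ (r - 1) * t) ^ 2 ≤ s * s * C := by
    calc (16 * 2 ^ (r - 1) * t) ^ 2 ≤ (16 * 2 ^ (r - 1) * (15 * s)) ^ 2 := by gcongr; omega
      _ = s * s * C := by rw [hC]; ring
  have surplus : s * s * C + M.natAbs ≤ s * s * t := by
    calc s * s * C + M.natAbs ≤ s * s * C + s * s * M.natAbs := by
          gcongr; exact Nat.le_mul_of_pos_left _ hs
      _ = s * s * (C + M.natAbs) := by ring
      _ ≤ s * s * t := by gcongr; omega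
  have total := GtrGraph.wiener_add_le_wiener_deleteVertex_gtru1 r ht (s := s) (by omega)
  omega
end

section
/- No connected 3-regular (cubic) simple graph on at most 12 vertices contains a Šoltés vertex; that is, for every connected cubic graph G with |V(G)| ≤ 12 and every vertex v of G, either G − v is disconnected or W(G − v) ≠ W(G). -/
open SimpleGraph Finset

/-!
Let `v` be a vertex of a connected cubic graph `G` on `n ≤ 12` vertices; by the handshake lemma `n`
is even. A labelling of the vertices by `0, …, n - 1` in which `v` comes last is encoded by the
entries of the adjacency matrix below the diagonal. Among these labellings take one whose entries,
read row by row from the bottom and within each row from the right, are lexicographically largest.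
If no vertex above `u` distinguishes `w < x < u`, swapping `w` and `x` shows that an edge `u w`
forces the edge `u x`. In particular, since `G` is connected, every vertex but the last has a larger
neighbour: an edge leading from `{0, …, u}` to the largest possible vertex can be moved to `u`.

These two conditions and the bounds on the degrees leave few enough matrices for an exhaustive
search, which compares the two Wiener indices for each of them. The last vertex is the one to be
deleted, so the second index belongs to a leading block of the same matrix.

A matrix is packed into a single natural number and everything is computed by arithmetic and
bitwise operations on such numbers, which the kernel carries out natively. The definitions that it
has to evaluate call `Nat.add`, `Nat.land`, … by name, as unfolding the notation would dominate the
running time.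
-/

namespace SoltesSearch

section PackedMatrix

/-- `g x`, arranged so that the kernel evaluates `x` to a numeral before it unfolds `g`: the
recursor cannot reduce until its major premise `x.succ` is a numeral. -/
def eager {α : Type*} (g : ℕ → α) (x : ℕ) : α :=
  Nat.rec (g 0) (fun k _ => g k) x.succ

theorem eager_eq {α : Type*} (g : ℕ → α) (x : ℕ) : eager g x = g x := by
  cases x <;> rfl

/-- The sum of `f k` over `k < n`, in a form the kernel evaluates quickly. -/
def sumRange (f : ℕ → ℕ) : ℕ → ℕ
  | 0 => 0
  | n + 1 => (sumRange f n).add (f n)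

theorem sumRange_eq_sum (f : ℕ → ℕ) (n : ℕ) : sumRange f n = ∑ k ∈ range n, f k := by
  induction n with
  | zero => rfl
  | succ n ih => rw [sum_range_succ, ← ih]; rfl

/-- The bitwise disjunction of `b` and all `f k` with `k < n`. -/
def orRange (b : ℕ) (f : ℕ → ℕ) : ℕ → ℕ
  | 0 => b
  | n + 1 => (orRange b f n).lor (f n)

theorem testBit_orRange (b : ℕ) (f : ℕ → ℕ) (n p : ℕ) :
    (orRange b f n).testBit p ↔ b.testBit p ∨ ∃ k < n, (f k).testBit p := by
  induction n with
  | zero => simp [orRange]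
  | succ n ih =>
    change (orRange b f n ||| f n).testBit p ↔ _
    simp only [Nat.testBit_or, Bool.or_eq_true, ih, Nat.lt_succ_iff_lt_or_eq, or_and_right,
      exists_or, exists_eq_left, or_assoc]

theorem sum_digits_lt {m n : ℕ} {d : ℕ → ℕ} (hd : ∀ i, d i < 2 ^ m) :
    ∑ i ∈ range n, 2 ^ (m * i) * d i < 2 ^ (m * n) := by
  induction n with
  | zero => simp
  | succ n ih =>
    calc ∑ i ∈ range (n + 1), 2 ^ (m * i) * d i
        < 2 ^ (m * n) * (d n + 1) := by rw [sum_range_succ]; linarith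
      _ ≤ 2 ^ (m * n) * 2 ^ m := Nat.mul_le_mul_left _ (hd n)
      _ = 2 ^ (m * (n + 1)) := by rw [← pow_add, mul_add_one]

theorem testBit_sum_digits {m n : ℕ} {d : ℕ → ℕ} (hd : ∀ i, d i < 2 ^ m) (i : ℕ) {j : ℕ}
    (hj : j < m) :
    (∑ i ∈ range n, 2 ^ (m * i) * d i).testBit (m * i + j) =
      (decide (i < n) && (d i).testBit j) := by
  induction n with
  | zero => simp
  | succ n ih =>
    rw [sum_range_succ, add_comm, Nat.testBit_two_pow_mul_add _ (sum_digits_lt hd), ih]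
    rcases lt_trichotomy i n with hlt | rfl | hgt
    · have : m * i + j < m * n := by nlinarith
      simp [this, hlt, hlt.trans n.lt_succ_self]
    · simp
    · have hle : m * n + m ≤ m * i := by nlinarith
      have hbit : (d n).testBit (m * i + j - m * n) = false :=
        Nat.testBit_lt_two_pow ((hd n).trans_le (Nat.pow_le_pow_right two_pos (by omega)))
      simp [hbit, show ¬ m * i + j < m * n by omega, show ¬ i < n + 1 by omega]

theorem eq_of_testBit_mul_add {m x y : ℕ} (hm : 0 < m)
    (h : ∀ i, ∀ j < m, x.testBit (m * i + j) = y.testBit (m * i + j)) : x = y := by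
  refine Nat.eq_of_testBit_eq fun p => ?_
  simpa only [Nat.div_add_mod] using h (p / m) (p % m) (Nat.mod_lt _ hm)

/-- `S` is a packed matrix of the relation `r`, with entry `i`, `j` at bit `m * i + j`. Bits outside
the `n × n` block are arbitrary, so that `S` is also a packed matrix of each leading block. -/
def Encodes (m : ℕ) {n : ℕ} (S : ℕ) (r : Fin n → Fin n → Prop) : Prop :=
  ∀ i j : Fin n, S.testBit (m * i + j) ↔ r i j

variable {m n S A B : ℕ} {r s : Fin n → Fin n → Prop}

theorem Encodes.congr (hS : Encodes m S r) (h : ∀ i j, r i j ↔ s i j) : Encodes m S s :=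
  fun i j => (hS i j).trans (h i j)

theorem Encodes.castSucc {r : Fin (n + 1) → Fin (n + 1) → Prop} (hS : Encodes m S r) :
    Encodes m S fun i j : Fin n => r i.castSucc j.castSucc :=
  fun i j => hS i.castSucc j.castSucc

/-- Row `i` of the packed matrix `S`, with entry `j` at bit `j`. -/
def row (m S i : ℕ) : ℕ :=
  (S.shiftRight (m.mul i)).mod (Nat.pow 2 m)

theorem testBit_row {m S i j : ℕ} (hj : j < m) :
    (row m S i).testBit j = S.testBit (m * i + j) := by
  change (S >>> (m * i) % 2 ^ m).testBit j = _
  simp [hj]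

theorem row_lt (m S i : ℕ) : row m S i < 2 ^ m :=
  Nat.mod_lt _ (Nat.two_pow_pos m)

/-- Column `j` of a packed matrix with `n` rows, spread out so that entry `i` is bit `m * i`. -/
def col (m n S j : ℕ) : ℕ :=
  (S.shiftRight j).land (sumRange (fun i => Nat.pow 2 (m.mul i)) n)

theorem col_eq_sum {m n S j : ℕ} (hm : 0 < m) :
    col m n S j = ∑ i ∈ range n, 2 ^ (m * i) * (S.testBit (m * i + j)).toNat := by
  have hb : ∀ b : Bool, b.toNat < 2 ^ m := fun b =>
    (Bool.toNat_lt b).trans_le (Nat.pow_le_pow_right two_pos hm)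
  refine eq_of_testBit_mul_add hm fun i l hl => ?_
  change (S >>> j &&& sumRange (fun i => 2 ^ (m * i)) n).testBit _ = _
  have hones : sumRange (fun i => 2 ^ (m * i)) n =
      ∑ i ∈ range n, 2 ^ (m * i) * true.toNat := by simp [sumRange_eq_sum]
  rw [Nat.testBit_and, Nat.testBit_shiftRight, hones, testBit_sum_digits (fun _ => hb _) i hl,
    testBit_sum_digits (fun _ => hb _) i hl]
  cases l with
  | zero =>
    rw [add_comm j]
    cases S.testBit (m * i + j) <;> simp
  | succ l => cases S.testBit (m * i + j) <;> simp [Nat.testBit_succ]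

/-- The packed `n × n` identity matrix. -/
def identity (m n : ℕ) : ℕ :=
  sumRange (fun i => Nat.pow 2 ((m.mul i).add i)) n

theorem encodes_identity (hn : n ≤ m) :
    Encodes m (identity m n) (fun i j : Fin n => i = j) := by
  intro i j
  have hd : ∀ i, (if i < n then 2 ^ i else 0) < 2 ^ m := fun i => by
    split_ifs with hi
    · exact Nat.pow_lt_pow_right one_lt_two (hi.trans_le hn)
    · exact Nat.two_pow_pos m
  have hsum : identity m n = ∑ i ∈ range n, 2 ^ (m * i) * if i < n then 2 ^ i else 0 := by
    refine (sumRange_eq_sum _ n).trans (sum_congr rfl fun i hi => ?_)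
    rw [if_pos (mem_range.1 hi), ← pow_add]
    rfl
  rw [hsum, testBit_sum_digits hd i (j.2.trans_le hn)]
  simp [Nat.testBit_two_pow, Fin.ext_iff]

theorem toNat_eq_ite {b : Bool} {p : Prop} [Decidable p] (h : b ↔ p) :
    b.toNat = if p then 1 else 0 := by
  cases b <;> simp_all

/-- The number of nonzero entries in row `i` of a packed `n × n` matrix. -/
def degree (m n S i : ℕ) : ℕ :=
  eager (fun r => sumRange (fun j => (r.shiftRight j).mod 2) n) (row m S i)

theorem degree_eq_ncard (hS : Encodes m S r) (hn : n ≤ m) (i : Fin n) :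
    degree m n S i = {j | r i j}.ncard := by
  classical
  rw [degree, eager_eq, sumRange_eq_sum, sum_range, ← coe_filter_univ, Set.ncard_coe_finset,
    card_filter]
  refine sum_congr rfl fun j _ => ?_
  rw [← toNat_eq_ite (hS i j), ← testBit_row (j.2.trans_le hn), Nat.toNat_testBit,
    ← Nat.shiftRight_eq_div_pow]
  rfl

/-- The number of nonzero entries of a packed `n × n` matrix. Adding up the columns gives a number
whose digits in base `2 ^ m` are the row sums, and a number is congruent to its digit sum modulo
`2 ^ m - 1`. -/
def count (m n S : ℕ) : ℕ :=
  (sumRange (col m n S) n).mod (Nat.pow 2 m).pred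

theorem count_eq_card [DecidableRel r] (hS : Encodes m S r) (hn : n * n < 2 ^ m - 1) :
    count m n S = #{p : Fin n × Fin n | r p.1 p.2} := by
  have hm : 0 < m := by
    rcases m.eq_zero_or_pos with rfl | hm
    · simp at hn
    · exact hm
  have hdigits : sumRange (col m n S) n ≡ #{p : Fin n × Fin n | r p.1 p.2} [MOD 2 ^ m - 1] := by
    have hone : 2 ^ m ≡ 1 [MOD 2 ^ m - 1] :=
      ((Nat.modEq_iff_dvd' Nat.one_le_two_pow).2 dvd_rfl).symm
    rw [sumRange_eq_sum, sum_range, card_filter, Fintype.sum_prod_type, sum_comm]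
    refine Nat.ModEq.sum fun j _ => ?_
    rw [col_eq_sum hm, sum_range]
    refine Nat.ModEq.sum fun i _ => ?_
    rw [toNat_eq_ite (hS i j), pow_mul]
    simpa only [one_pow, one_mul] using (hone.pow i).mul_right (if r i j then 1 else 0)
  have hcard : #{p : Fin n × Fin n | r p.1 p.2} ≤ n * n :=
    (card_le_univ _).trans_eq (by simp)
  exact Eq.trans hdigits (Nat.mod_eq_of_lt (hcard.trans_lt hn))

theorem sub_count_eq_card [DecidableRel r] (hS : Encodes m S r) (hn : n * n < 2 ^ m - 1) :
    (n.mul n).sub (count m n S) = #{p : Fin n × Fin n | ¬ r p.1 p.2} := by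
  have hall : count m n S + #{p : Fin n × Fin n | ¬ r p.1 p.2} = n * n := by
    rw [count_eq_card hS hn, card_filter_add_card_filter_not]
    simp
  exact Nat.sub_eq_of_eq_add' hall.symm

/-- The Boolean matrix `B ∨ A * B`, as the union of the outer products of the columns of `A` and the
rows of `B`. -/
def grow (m n A B : ℕ) : ℕ :=
  orRange B (fun k => (col m n A k).mul (row m B k)) n

theorem encodes_grow (hA : Encodes m A r) (hB : Encodes m B s) (hn : n ≤ m) :
    Encodes m (grow m n A B) (fun i j => s i j ∨ ∃ k, r i k ∧ s k j) := by
  intro i j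
  have houter : ∀ k : Fin n, ((col m n A k).mul (row m B k)).testBit (m * i + j) ↔
      r i k ∧ s k j := fun k => by
    have hd : ∀ l, (A.testBit (m * l + k)).toNat * row m B k < 2 ^ m := fun l => by
      cases A.testBit (m * l + k) <;> simp [row_lt]
    have hsum : (col m n A k).mul (row m B k) =
        ∑ l ∈ range n, 2 ^ (m * l) * ((A.testBit (m * l + k)).toNat * row m B k) := by
      change col m n A k * row m B k = _
      simp only [col_eq_sum (i.pos.trans_le hn), sum_mul, mul_assoc]
    rw [hsum, testBit_sum_digits hd i (j.2.trans_le hn), ← hA i k, ← hB k j,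
      ← testBit_row (j.2.trans_le hn)]
    cases A.testBit (m * i + k) <;> simp
  rw [grow, testBit_orRange, hB i j]
  exact or_congr_right ⟨fun ⟨k, hk, h⟩ => ⟨⟨k, hk⟩, (houter ⟨k, hk⟩).1 h⟩,
    fun ⟨k, h⟩ => ⟨k, k.2, (houter k).2 h⟩⟩

/-- The packed adjacency matrix `S` with the edge `u w` added. -/
def addEdge (m u w S : ℕ) : ℕ :=
  (S.lor (Nat.pow 2 ((m.mul u).add w))).lor (Nat.pow 2 ((m.mul w).add u))

theorem Encodes.addEdge (hS : Encodes m S r) (hn : n ≤ m) (u w : Fin n) :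
    Encodes m (addEdge m u w S) fun i j => r i j ∨ (i = u ∧ j = w) ∨ (i = w ∧ j = u) := by
  have hinj : ∀ i j k l : Fin n, m * k + l = m * i + j ↔ i = k ∧ j = l := by
    refine fun i j k l => ⟨fun h => ?_, by rintro ⟨rfl, rfl⟩; rfl⟩
    have hj := j.2.trans_le hn
    have hl := l.2.trans_le hn
    have hik : (i : ℕ) = k := by
      simpa [Nat.mul_add_div (Nat.zero_lt_of_lt hj), Nat.div_eq_of_lt, hj, hl] using
        congrArg (· / m) h.symm
    rw [hik] at h
    exact ⟨Fin.ext hik, Fin.ext (by omega)⟩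
  intro i j
  change ((S ||| 2 ^ (m * u + w)) ||| 2 ^ (m * w + u)).testBit (m * i + j) ↔ _
  simp only [← hS i j, Nat.testBit_or, Nat.testBit_two_pow, Bool.or_eq_true, decide_eq_true_eq,
    hinj, or_assoc]

end PackedMatrix

section Distance

variable {m n A : ℕ} {V : Type*} {G : SimpleGraph V}

theorem dist_le_succ_iff (hG : G.Connected) {u v : V} {k : ℕ} :
    G.dist u v ≤ k + 1 ↔ G.dist u v ≤ k ∨ ∃ w, G.Adj u w ∧ G.dist w v ≤ k := by
  constructor
  · intro hle
    obtain ⟨p, hp⟩ := hG.exists_walk_length_eq_dist u v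
    cases p with
    | nil => simp
    | cons hadj q =>
      rw [Walk.length_cons] at hp
      exact Or.inr ⟨_, hadj, (dist_le q).trans (by omega)⟩
  · rintro (hle | ⟨w, hadj, hle⟩)
    · exact hle.trans k.le_succ
    · calc G.dist u v ≤ G.dist u w + G.dist w v := hG.dist_triangle
        _ ≤ k + 1 := by rw [dist_eq_one_iff_adj.2 hadj]; omega

theorem dist_lt_card [Finite V] (hG : G.Connected) (u v : V) : G.dist u v < Nat.card V := by
  cases nonempty_fintype V
  rw [Nat.card_eq_fintype_card]
  obtain ⟨p, hp, hlen⟩ := hG.exists_path_of_dist u v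
  exact hlen ▸ hp.length_lt

/-- `∑ (d i j - k)` over all ordered pairs, where `B` is the matrix of the relation `d i j ≤ k` for
the distance `d` of the graph with adjacency matrix `A`, provided that `d i j ≤ k + f` always. -/
def distSumFrom (m n A : ℕ) : ℕ → ℕ → ℕ
  | 0, _ => 0
  | f + 1, B => match (n.mul n).sub (count m n B) with
    | 0 => 0
    | far + 1 => far.succ.add (eager (distSumFrom m n A f) (grow m n A B))

theorem distSumFrom_eq (hG : G.Connected) (e : Fin n ≃ V) (hn : n ≤ m)
    (hcount : n * n < 2 ^ m - 1) (hA : Encodes m A fun i j => G.Adj (e i) (e j)) (f k : ℕ)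
    (hf : n ≤ k + f) (B : ℕ) (hB : Encodes m B fun i j => G.dist (e i) (e j) ≤ k) :
    distSumFrom m n A f B = ∑ p : Fin n × Fin n, (G.dist (e p.1) (e p.2) - k) := by
  induction f generalizing k B with
  | zero =>
    have : Finite V := .of_equiv _ e
    have hlt (u v : V) : G.dist u v < n := by
      simpa [← Nat.card_congr e] using dist_lt_card hG u v
    refine (sum_eq_zero fun p _ => ?_).symm
    have := hlt (e p.1) (e p.2)
    omega
  | succ f ih =>
    have hsplit : ∑ p : Fin n × Fin n, (G.dist (e p.1) (e p.2) - k) =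
        #{p : Fin n × Fin n | ¬ G.dist (e p.1) (e p.2) ≤ k} +
          ∑ p : Fin n × Fin n, (G.dist (e p.1) (e p.2) - (k + 1)) := by
      rw [card_filter, ← sum_add_distrib]
      refine sum_congr rfl fun p _ => ?_
      split_ifs <;> omega
    have hgrow : Encodes m (grow m n A B) fun i j => G.dist (e i) (e j) ≤ k + 1 :=
      (encodes_grow hA hB hn).congr fun i j => by
        simp only [dist_le_succ_iff hG, e.surjective.exists]
    rw [distSumFrom, sub_count_eq_card hB hcount]
    split
    · next hzero =>
      rw [card_eq_zero, filter_eq_empty_iff] at hzero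
      exact (sum_eq_zero fun p hp => tsub_eq_zero_of_le (not_not.1 (hzero hp))).symm
    · next far hfar =>
      rw [hsplit, hfar, eager_eq, ih (k + 1) (by omega) _ hgrow]
      rfl

/-- The sum of the distances over all ordered pairs of vertices of the graph on the first `n`
vertices with packed adjacency matrix `A`. -/
def distSum (m n A : ℕ) : ℕ :=
  eager (distSumFrom m n A n) (identity m n)

theorem distSum_eq [Fintype V] (hG : G.Connected) (e : Fin n ≃ V) (hn : n ≤ m)
    (hcount : n * n < 2 ^ m - 1) (hA : Encodes m A fun i j => G.Adj (e i) (e j)) :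
    distSum m n A = ∑ u, ∑ v, G.dist u v := by
  have hid : Encodes m (identity m n) fun i j => G.dist (e i) (e j) ≤ 0 :=
    (encodes_identity hn).congr fun i j => by
      rw [Nat.le_zero, hG.dist_eq_zero_iff, e.apply_eq_iff_eq]
  rw [distSum, eager_eq, distSumFrom_eq hG e hn hcount hA n 0 (by omega) _ hid,
    Fintype.sum_prod_type, ← e.sum_comp]
  exact sum_congr rfl fun i _ => e.sum_comp (G.dist (e i))

end Distance

section Search

/-- Decides on the edges from `u` to the vertices below `w`, from `w - 1` down to `0`, and requires
`next` of every resulting packed matrix. A branch is dropped, that is, counts as `true`, if `u` can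
no longer reach degree `d`, if an end of a new edge already has degree `d`, or if the edge violates
`IsTwinSorted` for two consecutive vertices: when their rows agree just before the edge from `u` to
the first is added, neither `u` nor any vertex above `u` is adjacent to exactly one of them. -/
def extend (m n d u : ℕ) (next : ℕ → Bool) : ℕ → ℕ → Bool
  | 0, S => (degree m n S u).blt d || next S
  | w + 1, S => ((degree m n S u).add w.succ).blt d ||
      extend m n d u next w S &&
        (!((degree m n S u).blt d && (degree m n S w).blt d &&
            (w.succ.beq u || !(row m S w).beq (row m S w.succ))) ||
          eager (extend m n d u next w) (addEdge m u w S))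

/-- For `u = n` and `S = 0`, whether `P` holds for certain packed matrices, among them an adjacency
matrix of each connected `d`-regular graph on `n` vertices whose labelling is twin-sorted. In
general `S` holds the edges whose larger end is at least `u`, and the others remain to be decided.
A branch is dropped if a vertex other than the last has no larger neighbour. -/
def search (m n d : ℕ) (P : ℕ → Bool) : ℕ → ℕ → Bool
  | 0, S => P S
  | u + 1, S => (u.succ.blt n && (row m S u).beq 0) || extend m n d u (search m n d P u) u S

variable {m n d S : ℕ} {H : SimpleGraph (Fin n)}

/-- Adjacency in `H` through an edge whose larger end is above `u`, or is `u` while its smaller end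
is at least `w`: the edges that the search has already decided on when the pair `u`, `w - 1` is
up next. -/
def DecidedAdj (H : SimpleGraph (Fin n)) (u w : ℕ) (i j : Fin n) : Prop :=
  H.Adj i j ∧ (u < max (i : ℕ) j ∨ u = max (i : ℕ) j ∧ w ≤ min (i : ℕ) j)

/-- A normal form of labellings: if no vertex above `u` tells the vertices `w < x` below `u` apart,
then `u` is adjacent to `x` as soon as it is adjacent to `w`. -/
def IsTwinSorted (H : SimpleGraph (Fin n)) : Prop :=
  ∀ ⦃w x u : Fin n⦄, w < x → x < u → (∀ i > u, H.Adj i w ↔ H.Adj i x) → H.Adj u w → H.Adj u x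

theorem IsTwinSorted.exists_adj_gt (hH : IsTwinSorted H) (hconn : H.Connected) {u v : Fin n}
    (huv : u < v) : ∃ i > u, H.Adj u i := by
  classical
  by_contra! hnone
  obtain ⟨p⟩ := hconn.preconnected u v
  obtain ⟨e, -, he₁, he₂⟩ := p.exists_boundary_dart (Set.Iic u) Set.self_mem_Iic huv.not_ge
  obtain ⟨i, hi, hmax⟩ :=
    (univ.filter fun i => u < i ∧ ∃ j ≤ u, H.Adj i j).exists_max_image id
      ⟨e.snd, by simpa using ⟨not_le.1 he₂, e.fst, he₁, e.adj.symm⟩⟩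
  simp only [mem_filter_univ, id] at hi hmax
  obtain ⟨hui, j, hju, hij⟩ := hi
  have habove : ∀ k > i, ∀ l ≤ u, ¬ H.Adj k l := fun k hk l hl hkl =>
    (hmax k ⟨hui.trans hk, l, hl, hkl⟩).not_gt hk
  have hne : j ≠ u := by
    rintro rfl
    exact hnone i hui hij.symm
  exact hnone i hui (hH (hju.lt_of_ne hne) hui
    (fun k hk => iff_of_false (habove k hk j hju) (habove k hk u le_rfl)) hij).symm

theorem ncard_decidedAdj_lt {u w : ℕ} {i j : Fin n} (hadj : H.Adj i j)
    (hj : ¬ DecidedAdj H u w i j) :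
    {j | DecidedAdj H u w i j}.ncard < (H.neighborSet i).ncard :=
  Set.ncard_lt_ncard ⟨fun _ h => h.1, fun hle => hj (hle hadj)⟩

theorem ncard_neighborSet_le (u : Fin n) (w : ℕ) :
    (H.neighborSet u).ncard ≤ {j | DecidedAdj H u w u j}.ncard + w := by
  have hcover : H.neighborSet u ⊆ {j | DecidedAdj H u w u j} ∪ {j : Fin n | (j : ℕ) < w} :=
    fun j hadj => or_iff_not_imp_right.2 fun hj => ⟨hadj, by
      rw [Set.mem_ofPred_eq] at hj
      omega⟩
  have hbelow : {j : Fin n | (j : ℕ) < w}.ncard ≤ w := by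
    rw [← coe_filter_univ, Set.ncard_coe_finset, Fin.card_filter_val_lt]
    exact min_le_right n w
  calc (H.neighborSet u).ncard
      ≤ ({j | DecidedAdj H u w u j} ∪ {j : Fin n | (j : ℕ) < w}).ncard := Set.ncard_le_ncard hcover
    _ ≤ _ := (Set.ncard_union_le _ _).trans (Nat.add_le_add_left hbelow _)

theorem blt_degree_add_eq_false (hn : n ≤ m) {u : Fin n} (hdeg : (H.neighborSet u).ncard = d)
    {w : ℕ} (hS : Encodes m S (DecidedAdj H u w)) : ((degree m n S u).add w).blt d = false := by
  rw [degree_eq_ncard hS hn, ← hdeg, Bool.eq_false_iff, ne_eq, Nat.blt_eq]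
  exact (ncard_neighborSet_le u w).not_gt

theorem blt_degree_eq_true (hn : n ≤ m) {i j : Fin n} (hdeg : (H.neighborSet i).ncard = d)
    {u w : ℕ} (hS : Encodes m S (DecidedAdj H u w)) (hadj : H.Adj i j)
    (hj : ¬ DecidedAdj H u w i j) : (degree m n S i).blt d = true := by
  rw [degree_eq_ncard hS hn, ← hdeg, Nat.blt_eq]
  exact ncard_decidedAdj_lt hadj hj

theorem row_ne_zero (hsorted : IsTwinSorted H) (hconn : H.Connected) (hn : n ≤ m) {u : Fin n}
    (hu : (u : ℕ) + 1 < n) (hS : Encodes m S (DecidedAdj H (u + 1) 0)) : row m S u ≠ 0 := by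
  obtain ⟨i, hi, hadj⟩ :=
    hsorted.exists_adj_gt hconn (u := u) (v := ⟨u + 1, hu⟩) (Fin.lt_def.2 (Nat.lt_succ_self u))
  intro hzero
  have hbit : (row m S u).testBit i := by
    rw [testBit_row (i.2.trans_le hn), hS u i]
    exact ⟨hadj, by omega⟩
  rw [hzero, Nat.zero_testBit] at hbit
  exact Bool.false_ne_true hbit

theorem row_ne_of_adj (hsorted : IsTwinSorted H) (hn : n ≤ m) {w u : Fin n}
    (hwu : (w : ℕ) + 1 < u) (hS : Encodes m S (DecidedAdj H u (w + 1))) (hadj : H.Adj u w) :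
    row m S w ≠ row m S (w + 1) := by
  intro hrow
  obtain ⟨x, hwx⟩ : ∃ x : Fin n, (x : ℕ) = w + 1 := ⟨⟨w + 1, by omega⟩, rfl⟩
  rw [← hwx] at hwu hS hrow
  have hsame (i : Fin n) : DecidedAdj H u x w i ↔ DecidedAdj H u x x i := by
    rw [← hS w i, ← hS x i, ← testBit_row (i.2.trans_le hn), hrow, testBit_row (i.2.trans_le hn)]
  have habove {i : Fin n} (hi : u < i) (y : Fin n) : H.Adj i y ↔ DecidedAdj H u x y i :=
    ⟨fun h => ⟨h.symm, by omega⟩, fun h => h.1.symm⟩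
  have hux : H.Adj u x :=
    hsorted (by omega) hwu (fun i hi => by rw [habove hi, habove hi, hsame]) hadj
  have hdecided : DecidedAdj H u x w u := (hsame u).2 ⟨hux.symm, by omega⟩
  have := hdecided.2
  omega

theorem decidedAdj_iff_succ {u x : Fin n} (hxu : x < u) (i j : Fin n) :
    DecidedAdj H u x i j ↔ DecidedAdj H u (x + 1) i j ∨
      H.Adj u x ∧ (i = u ∧ j = x ∨ i = x ∧ j = u) := by
  constructor
  · rintro ⟨hadj, hij⟩
    by_cases hnext : (u : ℕ) < max (i : ℕ) j ∨ (u : ℕ) = max (i : ℕ) j ∧ x + 1 ≤ min (i : ℕ) j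
    · exact .inl ⟨hadj, hnext⟩
    · have hends : i = u ∧ j = x ∨ i = x ∧ j = u := by simp only [Fin.ext_iff]; omega
      refine .inr ⟨?_, hends⟩
      rcases hends with ⟨rfl, rfl⟩ | ⟨rfl, rfl⟩
      exacts [hadj, hadj.symm]
  · rintro (⟨hadj, hij⟩ | ⟨hadj, ⟨rfl, rfl⟩ | ⟨rfl, rfl⟩⟩)
    · exact ⟨hadj, by omega⟩
    · exact ⟨hadj, by omega⟩
    · exact ⟨hadj.symm, by omega⟩

theorem extend_eq_false {next : ℕ → Bool} (hsorted : IsTwinSorted H)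
    (hreg : ∀ i, (H.neighborSet i).ncard = d) (hn : n ≤ m) (u : Fin n)
    (hnext : ∀ S, Encodes m S (DecidedAdj H u 0) → next S = false) (w : ℕ) (hw : w ≤ u) (S : ℕ)
    (hS : Encodes m S (DecidedAdj H u w)) : extend m n d u next w S = false := by
  have hneeded := blt_degree_add_eq_false hn (hreg u) hS
  induction w generalizing S with
  | zero => exact Bool.or_eq_false_iff.2 ⟨hneeded, hnext S hS⟩
  | succ w ih =>
    obtain ⟨x, rfl⟩ : ∃ x : Fin n, (x : ℕ) = w := ⟨⟨w, by omega⟩, rfl⟩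
    replace ih (S) (hS : Encodes m S (DecidedAdj H u x)) : extend m n d u next x S = false :=
      ih (by omega) S hS (blt_degree_add_eq_false hn (hreg u) hS)
    rw [extend, hneeded, Bool.false_or, Bool.and_eq_false_iff]
    by_cases hadj : H.Adj u x
    · right
      have hux : ¬ DecidedAdj H u (x + 1) u x := fun h => by have := h.2; omega
      have hxu : ¬ DecidedAdj H u (x + 1) x u := fun h => by have := h.2; omega
      have hrow : ((x : ℕ).succ.beq u || !(row m S x).beq (row m S (x : ℕ).succ)) = true := by
        rcases hw.eq_or_lt with heq | hlt
        · simp [heq]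
        · rw [Bool.or_eq_true, Bool.not_eq_true', ← Bool.not_eq_true, Nat.beq_eq, Nat.beq_eq]
          exact .inr (row_ne_of_adj hsorted hn hlt hS hadj)
      rw [blt_degree_eq_true hn (hreg u) hS hadj hux,
        blt_degree_eq_true hn (hreg x) hS hadj.symm hxu, hrow, eager_eq]
      exact ih _ ((hS.addEdge hn u x).congr fun i j => by simp [decidedAdj_iff_succ hw, hadj])
    · exact .inl (ih S (hS.congr fun i j => by simp [decidedAdj_iff_succ hw, hadj]))

theorem search_eq_false_of_encodes {P : ℕ → Bool} (hsorted : IsTwinSorted H) (hconn : H.Connected)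
    (hreg : ∀ i, (H.neighborSet i).ncard = d) (hn : n ≤ m)
    (hP : ∀ S, Encodes m S H.Adj → P S = false) (u : ℕ) (hu : u ≤ n) (S : ℕ)
    (hS : Encodes m S (DecidedAdj H u 0)) :
    search m n d P u S = false := by
  induction u generalizing S with
  | zero =>
    refine hP S (hS.congr fun i j => ⟨fun h => h.1, fun h => ⟨h, ?_⟩⟩)
    have := Fin.val_ne_of_ne h.ne
    omega
  | succ u ih =>
    obtain ⟨v, rfl⟩ : ∃ v : Fin n, (v : ℕ) = u := ⟨⟨u, hu⟩, rfl⟩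
    have hnonzero : ((v : ℕ).succ.blt n && (row m S v).beq 0) = false := by
      rw [Bool.and_eq_false_imp, Nat.blt_eq]
      intro hv
      rw [← Bool.not_eq_true, Nat.beq_eq]
      exact row_ne_zero hsorted hconn hn hv hS
    refine Bool.or_eq_false_iff.2 ⟨hnonzero, ?_⟩
    refine extend_eq_false hsorted hreg hn v (ih (by omega)) v le_rfl S (hS.congr fun i j => ?_)
    refine and_congr_right fun hadj => ?_
    have := Fin.val_ne_of_ne hadj.ne
    omega

theorem search_eq_false {P : ℕ → Bool} (hsorted : IsTwinSorted H) (hconn : H.Connected)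
    (hreg : ∀ i, (H.neighborSet i).ncard = d) (hn : n ≤ m)
    (hP : ∀ S, Encodes m S H.Adj → P S = false) :
    search m n d P n 0 = false := by
  refine search_eq_false_of_encodes hsorted hconn hreg hn hP n le_rfl 0 fun i j => ?_
  rw [Nat.zero_testBit]
  exact iff_of_false Bool.false_ne_true fun h => by have := h.2; omega

end Search

theorem exists_isTwinSorted {V : Type*} [Finite V] {G : SimpleGraph V} {k : ℕ}
    (hk : Nat.card V = k + 1) (v : V) :
    ∃ e : Fin (k + 1) ≃ V, e (Fin.last k) = v ∧ IsTwinSorted (G.comap e) := by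
  classical
  let labellings := {e : Fin (k + 1) ≃ V // e (Fin.last k) = v}
  let key : labellings → Colex (Fin (k + 1) → Colex (Fin (k + 1) → Prop)) := fun e =>
    toColex fun i => toColex fun j => G.Adj (e.1 i) (e.1 j)
  have hne : Nonempty labellings := by
    let e := (Finite.equivFinOfCardEq hk).symm
    exact ⟨(Equiv.swap (Fin.last k) (e.symm v)).trans e, by simp⟩
  obtain ⟨⟨e, he⟩, hmax⟩ := Finite.exists_max key
  refine ⟨e, he, fun w x u hwx hxu habove huw => by_contra fun hux => ?_⟩
  have hfix {i : Fin (k + 1)} (hi : x < i) : Equiv.swap w x i = i :=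
    Equiv.swap_apply_of_ne_of_ne (hwx.trans hi).ne' hi.ne'
  let e' : labellings := ⟨(Equiv.swap w x).trans e, by
    rw [Equiv.trans_apply, hfix (hxu.trans_le (Fin.le_last u)), he]⟩
  have hkey {i : Fin (k + 1)} (hi : x < i) (j : Fin (k + 1)) :
      key e' i j = G.Adj (e i) (e (Equiv.swap w x j)) :=
    congrArg (fun l => G.Adj (e l) (e (Equiv.swap w x j))) (hfix hi)
  refine (hmax e').not_gt ⟨u, fun i hi => funext fun j => ?_, x, fun j hj => ?_, ?_⟩
  · rw [hkey (hxu.trans hi)]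
    obtain rfl | hjw := eq_or_ne j w
    · rw [Equiv.swap_apply_left]
      exact propext (habove i hi)
    obtain rfl | hjx := eq_or_ne j x
    · rw [Equiv.swap_apply_right]
      exact propext (habove i hi).symm
    · rw [Equiv.swap_apply_of_ne_of_ne hjw hjx]
      rfl
  · rw [hkey hxu, hfix hj]
    rfl
  · rw [hkey hxu, Equiv.swap_apply_right]
    exact lt_of_le_not_ge (fun h => (hux h).elim) fun h => hux (h huw)

section Wiener

/-- Whether the graph on the first `n` vertices with packed adjacency matrix `S` and the graph
obtained by deleting its last vertex have different Wiener indices, provided that both are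
connected: for a disconnected graph `distSum` is a junk value. -/
def wienerNe (m n S : ℕ) : Bool :=
  !((distSum m n S).div 2).beq ((distSum m n.pred S).div 2)

variable {m n S : ℕ} {V : Type*} [Fintype V] {G : SimpleGraph V}

theorem wienerNe_eq_false_of_isSoltes (hconn : G.Connected) (e : Fin (n + 1) ≃ V)
    (hsoltes : IsSoltes G (e (Fin.last n))) (hn : n + 1 ≤ m)
    (hcount : (n + 1) * (n + 1) < 2 ^ m - 1) (hS : Encodes m S (G.comap e).Adj) :
    wienerNe m (n + 1) S = false := by
  let e' : Fin n ≃ {u : V // u ≠ e (Fin.last n)} :=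
    (finSuccAboveEquiv (Fin.last n)).trans (e.subtypeEquiv fun i => e.injective.ne_iff.symm)
  have hS' : Encodes m S fun i j => (deleteVertex G (e (Fin.last n))).Adj (e' i) (e' j) :=
    hS.castSucc.congr fun i j => by
      simp [e', deleteVertex, finSuccAboveEquiv_apply]
  have hW : distSum m (n + 1) S / 2 = wiener G := by
    rw [wiener, distSum_eq hconn e hn hcount hS]
  have hW' : distSum m n S / 2 = wiener (deleteVertex G (e (Fin.last n))) := by
    rw [wiener, distSum_eq hsoltes.1 e' (by omega) (by nlinarith) hS']
  rw [wienerNe, Bool.not_eq_false', Nat.beq_eq]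
  exact hW.trans (hsoltes.2.symm.trans hW'.symm)

theorem not_isSoltes_of_search {d : ℕ} (hconn : G.Connected)
    (hreg : ∀ v, (G.neighborSet v).ncard = d) (hm : Fintype.card V ≤ m)
    (hcount : Fintype.card V * Fintype.card V < 2 ^ m - 1)
    (hsearch : search m (Fintype.card V) d (wienerNe m (Fintype.card V)) (Fintype.card V) 0)
    (v : V) : ¬ IsSoltes G v := by
  intro hsoltes
  obtain ⟨n, hn⟩ := Nat.exists_eq_succ_of_ne_zero (Fintype.card_pos_iff.2 ⟨v⟩).ne'
  rw [hn] at hm hcount hsearch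
  obtain ⟨e, rfl, hsorted⟩ :=
    exists_isTwinSorted (G := G) (Nat.card_eq_fintype_card.trans hn) v
  have hreg' (i : Fin (n + 1)) : ((G.comap e).neighborSet i).ncard = d :=
    (Set.ncard_preimage_of_injective_subset_range e.injective
      (e.range_eq_univ.symm ▸ Set.subset_univ _)).trans (hreg (e i))
  have hfalse := search_eq_false hsorted ((Iso.comap e G).connected_iff.2 hconn) hreg' hm
    fun S hS => wienerNe_eq_false_of_isSoltes hconn e hsoltes hm hcount hS
  exact Bool.false_ne_true (hfalse.symm.trans hsearch)

end Wiener

theorem even_card_of_odd_degree {V : Type*} [Fintype V] {G : SimpleGraph V}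
    (hodd : ∀ v, Odd (G.neighborSet v).ncard) : Even (Fintype.card V) := by
  classical
  have hdegree (v : V) : Odd (G.degree v) := by
    rw [← card_neighborFinset_eq_degree, neighborFinset, ← Set.ncard_eq_toFinset_card']
    exact hodd v
  simpa [hdegree] using G.even_card_odd_degree_vertices

theorem search_cubic : ∀ n ∈ [2, 4, 6, 8, 10, 12], search 12 n 3 (wienerNe 12 n) n 0 := by
  decide +kernel

end SoltesSearch

/-- No connected cubic graph on at most 12 vertices has a Šoltés
vertex: for every vertex `v`, either `G − v` is disconnected or `W(G − v) ≠ W(G)`. -/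
theorem no_soltes_vertex_in_small_cubic_graphs {V : Type*} [Fintype V]
    (G : SimpleGraph V) (hcard : Fintype.card V ≤ 12) (hconn : G.Connected)
    (hcubic : ∀ v : V, (G.neighborSet v).ncard = 3) :
    ∀ v : V, ¬ IsSoltes G v := by
  intro v
  have heven : Even (Fintype.card V) :=
    SoltesSearch.even_card_of_odd_degree fun v => by rw [hcubic v]; decide
  have hpos : 0 < Fintype.card V := Fintype.card_pos_iff.2 ⟨v⟩
  refine SoltesSearch.not_isSoltes_of_search (m := 12) hconn hcubic hcard
    ((Nat.mul_le_mul hcard hcard).trans_lt (by norm_num))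
    (SoltesSearch.search_cubic _ ?_) v
  rw [Nat.even_iff] at heven
  simp only [List.mem_cons, List.not_mem_nil, or_false]
  omega
end
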